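/- arXiv:1811.11660 — 4 statements merged into one kernel-verified Lean document; each statement's English description precedes it below -/
import Mathlib

section
/- Let (Q, Σ) be a DFA with n = |Q| and let c be a natural number with c ≤ 3. If there exists a word w over Σ such that |Qw| ≤ n − c, then there exists a word w over Σ with |w| ≤ c² and |Qw| ≤ n − c. -/
/-- The image of a finite set of states `R` under a word (list of letters),
where each letter `s` acts on states via `act s`. -/
def wordImage {Q A : Type*} [DecidableEq Q] (act : A → Q → Q) (R : Finset Q) :
    List A → Finset Q
  | [] => R
  | s :: w => wordImage act (R.image (act s)) w

section ctxpart

structure Ctx {Q A : Type*} (act : A → Q → Q) (o i t : Q) (Perm : A → Prop)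
    (S : ℕ → Q → Prop) (R : ℕ → Q → Q → Prop) : Prop where
  oi : o ≠ i
  to' : t ≠ o
  ti : t ≠ i
  pinj : ∀ s, Perm s → ∀ x y, act s x = act s y → x = y
  po : ∀ s, Perm s → act s o = o ∨ act s o = i
  nmerge : ∀ s, ¬ Perm s → act s o = act s i
  ninj : ∀ s, ¬ Perm s → ∀ x y, act s x = act s y → x = y ∨ ((x = o ∨ x = i) ∧ (y = o ∨ y = i))
  nmiss : ∀ s, ¬ Perm s → ∀ x, act s x ≠ o
  exA : ∃ s, Perm s ∧ act s o = i
  exC : ∃ s, Perm s ∧ act s i = t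
  exb : ∃ s, ¬ Perm s
  symm : ∀ l d e, R l d e → R l e d
  ne : ∀ l d e, R l d e → d ≠ e
  Rp : ∀ s, Perm s → ∀ l d e, R l d e → R (l+1) (act s d) (act s e)
  Rn : ∀ s, ¬ Perm s → ∀ l d e, R l d e → e ≠ o → e ≠ i → R (l+1) o (act s e)
  Rn' : ∀ s, ¬ Perm s → ∀ l, R l o i → R (l+1) o (act s o)
  S2 : S 2 i
  Sp : ∀ s, Perm s → ∀ l d, S l d → S (l+1) (act s d)
  Sn : ∀ s, ¬ Perm s → ∀ l d, S l d → d ≠ o → d ≠ i → R (l+1) o (act s d)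
  inv : (∀ s, ∀ x, (x = o ∨ x = i ∨ x = t) → (act s x = o ∨ act s x = i ∨ act s x = t)) → False

variable {Q A : Type*} {act : A → Q → Q} {o i t : Q} {Perm : A → Prop}
    {S : ℕ → Q → Prop} {R : ℕ → Q → Q → Prop}

lemma Ctx.basic (h : Ctx act o i t Perm S R) {α : Q} (C4 : ∀ y, R 4 o y → y = α) :
    (∀ s, ¬ Perm s → act s t = α) ∧ 
    (∀ s, Perm s → act s i = o ∨ act s i = i ∨ act s i = t) := by
  obtain ⟨C, hC, hCi⟩ := h.exC
  obtain ⟨b, hb⟩ := h.exb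
  have h1 : ∀ s, Perm s → act s i ≠ o → act s i ≠ i → ∀ b, ¬ Perm b → act b (act s i) = α := by
    intro s hs h1 h2 b hb
    exact C4 _ (h.Sn b hb 3 _ (h.Sp s hs 2 _ h.S2) h1 h2)
  have h2 : ∀ s, ¬ Perm s → act s t = α := by
    intro s hs
    have := h1 C hC (hCi ▸ h.to') (hCi ▸ h.ti) s hs
    rwa [hCi] at this
  refine ⟨h2, ?_⟩
  intro s hs
  by_contra! hh
  have h3 := h1 s hs hh.1 hh.2.1 b hb
  have h4 := h2 b hb
  have := h.ninj b hb _ _ (h3.trans h4.symm)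
  tauto

lemma Ctx.k3 (h : Ctx act o i t Perm S R) {α β : Q} (hα : R 4 o α) (hβ : R 5 o β)
    (C4 : ∀ y, R 4 o y → y = α)
    (C5 : ∀ d e, R 5 d e → (d = o ∨ e = o) ∧ (d = α ∨ d = β ∨ e = α ∨ e = β))
    (C6 : ∀ d e, R 6 d e → (d = o ∨ e = o)) : False := by
  obtain ⟨C, hC, hCi⟩ := h.exC
  obtain ⟨T, hT, hTo⟩ := h.exA
  have ⟨b1, b2⟩ := h.basic C4
  have oi := h.oi
  have to' := h.to'
  have ti := h.ti
  have nα := h.ne _ _ _ hα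
  have nβ := h.ne _ _ _ hβ
  have e1 := C5 _ _ (h.Rp T hT _ _ _ hα)
  rw [hTo] at e1
  have e2 : act T α = o := by grind
  have e3 := h.pinj T hT
  have e4 := h.po C hC
  by_cases ha : α = i
  · subst ha
    have e5 := C5 _ _ (h.Rp C hC _ _ _ hα)
    have e6 := h.Rp C hC _ _ _ hα
    rw [hCi] at e5 e6
    have e7 : act C o = o := by grind
    rw [e7] at e6
    have e8 := C6 _ _ (h.Rp T hT _ _ _ e6)
    grind
  · have hb : β = i := by grind
    subst hb
    have e5 := C6 _ _ (h.Rp T hT _ _ _ hβ)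
    grind

lemma Ctx.k2 (h : Ctx act o i t Perm S R) {α β z : Q} (hα : R 4 o α) (hβ : R 5 o β)
    (zo : z ≠ o) (zi : z ≠ i) (ab : α ≠ β)
    (C4 : ∀ y, R 4 o y → y = α)
    (C5 : ∀ d e, R 5 d e → (d = o ∨ e = o) ∧ (d = α ∨ d = β ∨ e = α ∨ e = β))
    (C6 : ∀ d e, R 6 d e → (d = α ∨ d = β ∨ e = α ∨ e = β) ∧ (d = o ∨ e = o ∨ (d = i ∧ e = z) ∨ (d = z ∧ e = i)))
    (C7 : ∀ d e, R 7 d e → (d = o ∨ e = o ∨ (d = i ∧ e = z) ∨ (d = z ∧ e = i))) :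
    False := by
  obtain ⟨C, hC, hCi⟩ := h.exC
  obtain ⟨T, hT, hTo⟩ := h.exA
  obtain ⟨b, hb⟩ := h.exb
  have ⟨b1, b2⟩ := h.basic C4
  have oi := h.oi
  have to' := h.to'
  have ti := h.ti
  have nα := h.ne _ _ _ hα
  have nβ := h.ne _ _ _ hβ
  have e1 : ∀ T, Perm T → act T o = i → act T α = o ∧ (α = i ∨ β = i) := by
    intro T hT hTo
    have e1 := C5 _ _ (h.Rp T hT _ _ _ hα)
    rw [hTo] at e1
    grind
  have e4 := h.po C hC
  by_cases ha : α = i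
  · subst ha
    have e5 := C5 _ _ (h.Rp C hC _ _ _ hα)
    have e6 := h.Rp C hC _ _ _ hα
    rw [hCi] at e5 e6
    have e7 : act C o = o := by grind
    have hbt : β = t := by grind
    subst hbt
    have e8 : ∀ T, Perm T → act T o = α → act T β = z := by
      intro T hT hTo
      have := C6 _ _ (h.Rp T hT _ _ _ hβ)
      have := h.pinj T hT
      grind
    have hz : z = β := by
      have h1 := C5 _ _ (h.Sn b hb 4 _ (h.Sp T hT 3 _ (h.Sp C hC 2 _ h.S2)) (by grind) (by grind))
      rw [hCi, e8 T hT hTo] at h1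
      have h2 := h.Rn' b hb _ hα
      have h2' := C5 _ _ h2
      have h3 := h.nmerge b hb
      have h4 := h.ninj b hb
      have h5 := b1 b hb
      have h6 := h.nmiss b hb
      grind
    subst hz
    apply h.inv
    intro s x hx
    by_cases hs : Perm s
    · have h1 := C5 _ _ (h.Rp s hs _ _ _ hα)
      have h2 := C6 _ _ (h.Rp s hs _ _ _ hβ)
      have := h.po s hs
      grind
    · have h2 := C5 _ _ (h.Rn' s hs _ hα)
      have h3 := h.nmerge s hs
      have h5 := b1 s hs
      have h6 := h.nmiss s hs
      grind
  · have hb : β = i := by grind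
    subst hb
    have e5 : ∀ T, Perm T → act T o = β → act T β = z ∧ z = t := by
      intro T hT hTo
      have h1 := C6 _ _ (h.Rp T hT _ _ _ hβ)
      have h2 := e1 T hT hTo
      have h3 := h.pinj T hT
      have h4 := b2 T hT
      grind
    have hz := (e5 T hT hTo).2
    subst hz
    have e6 : ∀ T, Perm T → act T o = β → act T z = o ∧ α = z := by
      intro T hT hTo
      have h0 := h.Rp T hT _ _ _ (h.Rp T hT _ _ _ hβ)
      have h1 := C7 _ _ h0
      have h2 := e1 T hT hTo
      have h3 := h.pinj T hT
      have h4 := e5 T hT hTo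
      grind
    have hz := (e6 T hT hTo).2
    subst hz
    apply h.inv
    intro s x hx
    by_cases hs : Perm s
    · have h1 := C5 _ _ (h.Rp s hs _ _ _ hα)
      have h2 := C6 _ _ (h.Rp s hs _ _ _ hβ)
      have := h.po s hs
      grind
    · have h2 := C6 _ _ (h.Rn' s hs _ hβ)
      have h3 := h.nmerge s hs
      have h5 := b1 s hs
      have h6 := h.nmiss s hs
      grind

lemma Ctx.k1 (h : Ctx act o i t Perm S R) {α z : Q} (hα : R 4 o α)
    (zo : z ≠ o) (zi : z ≠ i)
    (C4 : ∀ y, R 4 o y → y = α)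
    (C5 : ∀ d e, R 5 d e → ((d = o ∧ e = α) ∨ (d = α ∧ e = o) ∨ (d = i ∧ e = z) ∨ (d = z ∧ e = i))) :
    False := by
  obtain ⟨C, hC, hCi⟩ := h.exC
  obtain ⟨T, hT, hTo⟩ := h.exA
  obtain ⟨b, hb⟩ := h.exb
  have ⟨b1, b2⟩ := h.basic C4
  have oi := h.oi
  have to' := h.to'
  have ti := h.ti
  have nα := h.ne _ _ _ hα
  have h3 := h.nmerge b hb
  have h4 := h.ninj b hb
  have h5 := b1 b hb
  have ha : α ≠ i := by
    rintro rfl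
    have := C5 _ _ (h.Rn' b hb _ hα)
    grind
  have hat : α = t := by
    have := C5 _ _ (h.Rn b hb _ _ _ hα nα.symm ha)
    grind
  subst hat
  have e1 := C5 _ _ (h.Rp C hC _ _ _ hα)
  have e2 := h.pinj C hC
  have e3 := h.po C hC
  have e4 : act C α = z := by grind
  have h1 := C5 _ _ (h.Sn b hb 4 _ (h.Sp C hC 3 _ (h.Sp C hC 2 _ h.S2)) (by grind) (by grind))
  rw [hCi, e4] at h1
  grind

/-- combine -/
lemma Ctx.final (h : Ctx act o i t Perm S R) {α z d1 e1 d2 e2 d3 e3 x1 y1 x2 y2 x3 y3 : Q}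
    (hα : R 4 o α) (hd1 : R 5 d1 e1) (hd2 : R 6 d2 e2) (hd3 : R 7 d3 e3)
    (zo : z ≠ o) (zi : z ≠ i)
    (D1 : ¬ (x1 = d1 ∨ x1 = e1 ∨ y1 = d1 ∨ y1 = e1))
    (D2 : ¬ (x2 = d2 ∨ x2 = e2 ∨ y2 = d2 ∨ y2 = e2))
    (D3 : ¬ (x3 = d3 ∨ x3 = e3 ∨ y3 = d3 ∨ y3 = e3))
    (H1 : ∀ l d e, R l d e → l ≤ 4 → (x1 = d ∨ x1 = e ∨ y1 = d ∨ y1 = e))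
    (H2 : ∀ l d e, R l d e → l ≤ 5 → (x2 = d ∨ x2 = e ∨ y2 = d ∨ y2 = e))
    (H3 : ∀ l d e, R l d e → l ≤ 6 → (x3 = d ∨ x3 = e ∨ y3 = d ∨ y3 = e))
    (H4 : ∀ l d e, R l d e → l ≤ 7 → (o = d ∨ o = e ∨ z = d ∨ z = e))
    (H5 : ∀ l d e, R l d e → l ≤ 8 → (o = d ∨ o = e ∨ i = d ∨ i = e)) : False := by
  have oi := h.oi
  have key : ∀ l d e, R l d e → l ≤ 7 → (d = o ∨ e = o ∨ (d = i ∧ e = z) ∨ (d = z ∧ e = i)) := by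
    intro l d e hr hl
    have := H4 l d e hr hl
    have := H5 l d e hr (by omega)
    grind
  have nα := h.ne _ _ _ hα
  have n1 := h.ne _ _ _ hd1
  have n2 := h.ne _ _ _ hd2
  have n3 := h.ne _ _ _ hd3
  have h10 := H1 _ _ _ hα (by omega)
  have h20 := H2 _ _ _ hα (by omega)
  have h30 := H3 _ _ _ hα (by omega)
  have h21 := H2 _ _ _ hd1 (by omega)
  have h31 := H3 _ _ _ hd1 (by omega)
  have h32 := H3 _ _ _ hd2 (by omega)
  have norm : ∀ l d e, R l d e → l ≤ 7 → (∃ y, R l o y ∧ ((d = o ∧ e = y) ∨ (d = y ∧ e = o))) ∨ 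
       (R l i z ∧ ((d = i ∧ e = z) ∨ (d = z ∧ e = i))) := by
    intro l d e hr hl
    have h2 := h.symm _ _ _ hr
    rcases key l d e hr hl with rfl | rfl | ⟨rfl, rfl⟩ | ⟨rfl, rfl⟩
    · exact Or.inl ⟨e, hr, by simp⟩
    · exact Or.inl ⟨d, h2, by simp⟩
    · exact Or.inr ⟨hr, by simp⟩
    · exact Or.inr ⟨h2, by simp⟩
  have C5 : ∀ d e, R 5 d e → _ := fun d e hr => And.intro (H2 5 d e hr (by omega)) (And.intro (H3 5 d e hr (by omega)) (key 5 d e hr (by omega)))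
  have C4 : ∀ y, R 4 o y → _ := fun e hr => And.intro (H1 4 o e hr (by omega)) (And.intro (H2 4 o e hr (by omega)) (H3 4 o e hr (by omega)))
  rcases norm _ _ _ hd1 (by omega) with ⟨β, hβ, hd1'⟩ | ⟨hiz, hd1'⟩
  · have nβ := h.ne _ _ _ hβ
    have ab : α ≠ β := by grind
    rcases norm _ _ _ hd2 (by omega) with ⟨γ, hγ, hd2'⟩ | ⟨hiz, hd2'⟩
    · have nγ := h.ne _ _ _ hγ
      have hP2 : (x2 = α ∧ y2 = β) ∨ (x2 = β ∧ y2 = α) := by grind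
      have hP3 : x3 = o ∨ y3 = o := by grind
      have : (d3 = i ∧ e3 = z) ∨ (d3 = z ∧ e3 = i) := by
        have := key _ _ _ hd3 (by omega)
        grind
      refine h.k3 hα hβ ?_ ?_ ?_
      · intro y hy
        have := C4 y hy
        have := h.ne _ _ _ hy
        grind
      · intro d e hy
        have := C5 d e hy
        grind
      · intro d e hy
        have := key _ _ _ hy (by omega)
        have := H3 _ _ _ hy (by omega)
        grind
    · have hP2 : x2 = o ∨ y2 = o ∨ (x2 = α ∧ y2 = β) ∨ (x2 = β ∧ y2 = α) := by grind
      have hd3' : d3 = o ∨ e3 = o ∨ (d3 = i ∧ e3 = z) ∨ (d3 = z ∧ e3 = i) := key _ _ _ hd3 (by omega)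
      have hD3o : d3 = o ∨ e3 = o := by clear norm C5 C4 H1 H2 H3 H4 H5 key h10 h20 h30 h21 h31 D1 D2; grind
      have hP3o : x3 ≠ o ∧ y3 ≠ o := by clear norm C5 C4 H1 H2 H3 H4 H5 key h10 h20 h30 h21 h31 D1 D2; grind
      have hP3 : (x3 = α ∧ y3 = β) ∨ (x3 = β ∧ y3 = α) := by clear norm C5 C4 H1 H2 H3 H4 H5 key h10 h20 h21 D1 D2 hD3o hd3' D3; grind
      have hP2' : x2 = o ∨ y2 = o := by grind
      refine h.k2 hα hβ zo zi ab ?_ ?_ ?_ ?_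
      · intro y hy
        have := C4 y hy
        have := h.ne _ _ _ hy
        grind
      · intro d e hy
        have := C5 d e hy
        grind
      · intro d e hy
        have := key _ _ _ hy (by omega)
        have := H3 _ _ _ hy (by omega)
        grind
      · intro d e hy
        exact key _ _ _ hy (by omega)
  · rcases norm _ _ _ hd2 (by omega) with ⟨β, hβ, hd2'⟩ | ⟨hiz, hd2'⟩
    swap
    · grind
    have nβ := h.ne _ _ _ hβ
    have hd3' : d3 = o ∨ e3 = o ∨ (d3 = i ∧ e3 = z) ∨ (d3 = z ∧ e3 = i) := key _ _ _ hd3 (by omega)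
    have ab : α ≠ β := by grind
    have hD3o : d3 = o ∨ e3 = o := by clear norm C5 C4 H1 H2 H3 H4 H5 key h10 h20 h30 h21 h32 D1 D2; grind
    have hP3o : x3 ≠ o ∧ y3 ≠ o := by clear norm C5 C4 H1 H2 H3 H4 H5 key h10 h20 h30 h21 h31 D1 D2; grind
    have hP3 : (x3 = α ∧ y3 = β) ∨ (x3 = β ∧ y3 = α) := by clear norm C5 C4 H1 H2 H3 H4 H5 key h10 h20 h21 D1 D2 hD3o hd3' D3; grind
    have hP2 : (x2 = α ∨ y2 = α) ∧ x2 ≠ o ∧ y2 ≠ o ∧ x2 ≠ β ∧ y2 ≠ β := by grind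
    refine h.k1 hα zo zi ?_ ?_
    · intro y hy
      have := C4 y hy
      have := h.ne _ _ _ hy
      grind
    · intro d e hy
      have := C5 d e hy
      have := h.ne _ _ _ hy
      grind

end ctxpart

section bollo
variable {Q : Type*} [DecidableEq Q]

lemma pair_of_mem {D : Finset Q} (h : D.card = 2) {p : Q} (hp : p ∈ D) : ∃ y, y ≠ p ∧ D = {p, y} := by
  obtain ⟨a, b, hab, rfl⟩ := Finset.card_eq_two.1 h
  simp only [Finset.mem_insert, Finset.mem_singleton] at hp
  rcases hp with rfl | rfl
  · exact ⟨b, hab.symm, rfl⟩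
  · exact ⟨a, hab, Finset.pair_comm _ _⟩

lemma bollo1 (D : ℕ → Finset Q) (x y : ℕ → Q) (hD : ∀ j < 4, (D j).card = 1)
    (hits : ∀ i < 4, ∀ j < i, x i ∈ D j ∨ y i ∈ D j)
    (disj : ∀ i < 4, x i ∉ D i ∧ y i ∉ D i) : False := by
  obtain ⟨p0, h0⟩ := Finset.card_eq_one.1 (hD 0 (by omega))
  obtain ⟨p1, h1⟩ := Finset.card_eq_one.1 (hD 1 (by omega))
  obtain ⟨p2, h2⟩ := Finset.card_eq_one.1 (hD 2 (by omega))
  have a1 := hits 1 (by omega) 0 (by omega)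
  have a2 := hits 2 (by omega) 0 (by omega)
  have a3 := hits 2 (by omega) 1 (by omega)
  have a4 := hits 3 (by omega) 0 (by omega)
  have a5 := hits 3 (by omega) 1 (by omega)
  have a6 := hits 3 (by omega) 2 (by omega)
  have b1 := disj 1 (by omega)
  have b2 := disj 2 (by omega)
  simp only [h0, h1, h2, Finset.mem_singleton] at *
  grind

/-- Three sets of the family with a common point `p`, lying in no later pair. -/
lemma bolloThree (D : ℕ → Finset Q) (x y : ℕ → Q) (hD : ∀ j < 7, (D j).card = 2)
    (hits : ∀ i < 7, ∀ j < i, x i ∈ D j ∨ y i ∈ D j)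
    (disj : ∀ i < 7, x i ∉ D i ∧ y i ∉ D i) (p : Q) (a b c g : ℕ) (hab : a < b) (hbc : b < c)
    (hcg : c < g) (hg : g < 7) (ha : p ∈ D a) (hb : p ∈ D b) (hc : p ∈ D c) :
    x g = p ∨ y g = p := by
  obtain ⟨p0, _, h0⟩ := pair_of_mem (hD a (by omega)) ha
  obtain ⟨p1, _, h1⟩ := pair_of_mem (hD b (by omega)) hb
  obtain ⟨p2, _, h2⟩ := pair_of_mem (hD c (by omega)) hc
  have a1 := hits b (by omega) a (by omega)
  have a2 := hits c (by omega) a (by omega)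
  have a3 := hits c (by omega) b (by omega)
  have a4 := hits g (by omega) a (by omega)
  have a5 := hits g (by omega) b (by omega)
  have a6 := hits g (by omega) c (by omega)
  have b1 := disj b (by omega)
  have b2 := disj c (by omega)
  clear hits disj hD
  simp only [h0, h1, h2, Finset.mem_insert, Finset.mem_singleton] at a1 a2 a3 a4 a5 a6 b1 b2
  by_contra! hh
  have c1 : p0 ≠ p1 := by clear a2 a3 a4 a5 a6 b2; grind
  have c2 : p0 ≠ p2 := by clear a1 a3 a4 a5 a6 b1; grind
  have c3 : p1 ≠ p2 := by clear a1 a2 a4 a5 a6 b1; grind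
  clear a1 a2 a3 b1 b2
  grind

lemma bolloFour (D : ℕ → Finset Q) (x y : ℕ → Q) (hD : ∀ j < 7, (D j).card = 2)
    (hits : ∀ i < 7, ∀ j < i, x i ∈ D j ∨ y i ∈ D j)
    (disj : ∀ i < 7, x i ∉ D i ∧ y i ∉ D i) (p : Q) (a b c g : ℕ) (hab : a < b) (hbc : b < c)
    (hcg : c < g) (hg : g < 7) (ha : p ∈ D a) (hb : p ∈ D b) (hc : p ∈ D c) (hpg : p ∈ D g) :
    False := by
  have := bolloThree D x y hD hits disj p a b c g hab hbc hcg hg ha hb hc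
  have := disj g hg
  grind

lemma bolloAux (D : ℕ → Finset Q) (x y : ℕ → Q) (hD : ∀ j < 7, (D j).card = 2)
    (hits : ∀ i < 7, ∀ j < i, x i ∈ D j ∨ y i ∈ D j)
    (disj : ∀ i < 7, x i ∉ D i ∧ y i ∉ D i) (p q : Q)
    (hpq : ∀ j < 6, p ∈ D j ∨ q ∈ D j) (hp : p ∈ D 5) : False := by
  have F := bolloFour D x y hD hits disj
  have key : ∀ a b c a' b', a < b → b < c → c < 5 → a' < b' → b' < 5 →
      q ∈ D a → q ∈ D b → q ∈ D c → q ∉ D a' → q ∉ D b' → p ∈ D a' → p ∈ D b' → False := by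
    intro a b c a' b' h1 h2 h3 h4 h5 ha hb hc hna hnb hpa hpb
    have e1 := bolloThree D x y hD hits disj q a b c 5 h1 h2 h3 (by omega) ha hb hc
    obtain ⟨r, hr, hr'⟩ := pair_of_mem (hD a' (by omega)) hpa
    obtain ⟨s, hs, hs'⟩ := pair_of_mem (hD b' (by omega)) hpb
    have a1 := hits b' (by omega) a' (by omega)
    have a2 := hits 5 (by omega) a' (by omega)
    have a3 := hits 5 (by omega) b' (by omega)
    have d1 := disj b' (by omega)
    have d2 := disj 5 (by omega)
    have : x 5 ≠ p ∧ y 5 ≠ p := by constructor <;> (rintro rfl; tauto)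
    clear hits disj hD F d2
    simp only [hr', hs', Finset.mem_insert, Finset.mem_singleton] at a1 a2 a3 d1 hna hnb
    have c1 : r ≠ s := by clear a2 a3; grind
    clear a1 d1
    grind
  have h0 := hpq 0 (by omega)
  have h1 := hpq 1 (by omega)
  have h2 := hpq 2 (by omega)
  have h3 := hpq 3 (by omega)
  have h4 := hpq 4 (by omega)
  have Fp : ∀ a b c, a < b → b < c → c < 5 → p ∈ D a → p ∈ D b → p ∈ D c → False := 
    fun a b c h1 h2 h3 ha hb hc => F p a b c 5 h1 h2 h3 (by omega) ha hb hc hp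
  have Fq : ∀ a b c g, a < b → b < c → c < g → g < 5 → q ∈ D a → q ∈ D b → q ∈ D c → q ∈ D g → False := 
    fun a b c g h1 h2 h3 h4 ha hb hc hd => F q a b c g h1 h2 h3 (by omega) ha hb hc hd
  have q0 := Fq 0 1 2 3 (by omega) (by omega) (by omega) (by omega)
  have q1 := Fq 0 1 2 4 (by omega) (by omega) (by omega) (by omega)
  have q2 := Fq 0 1 3 4 (by omega) (by omega) (by omega) (by omega)
  have q3 := Fq 0 2 3 4 (by omega) (by omega) (by omega) (by omega)
  have q4 := Fq 1 2 3 4 (by omega) (by omega) (by omega) (by omega)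
  have p0 := Fp 0 1 2 (by omega) (by omega) (by omega)
  have p1 := Fp 0 1 3 (by omega) (by omega) (by omega)
  have p2 := Fp 0 1 4 (by omega) (by omega) (by omega)
  have p3 := Fp 0 2 3 (by omega) (by omega) (by omega)
  have p4 := Fp 0 2 4 (by omega) (by omega) (by omega)
  have p5 := Fp 0 3 4 (by omega) (by omega) (by omega)
  have p6 := Fp 1 2 3 (by omega) (by omega) (by omega)
  have p7 := Fp 1 2 4 (by omega) (by omega) (by omega)
  have p8 := Fp 1 3 4 (by omega) (by omega) (by omega)
  have p9 := Fp 2 3 4 (by omega) (by omega) (by omega)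
  have k0 := key 0 1 2 3 4 (by omega) (by omega) (by omega) (by omega) (by omega)
  have k1 := key 0 1 3 2 4 (by omega) (by omega) (by omega) (by omega) (by omega)
  have k2 := key 0 1 4 2 3 (by omega) (by omega) (by omega) (by omega) (by omega)
  have k3 := key 0 2 3 1 4 (by omega) (by omega) (by omega) (by omega) (by omega)
  have k4 := key 0 2 4 1 3 (by omega) (by omega) (by omega) (by omega) (by omega)
  have k5 := key 0 3 4 1 2 (by omega) (by omega) (by omega) (by omega) (by omega)
  have k6 := key 1 2 3 0 4 (by omega) (by omega) (by omega) (by omega) (by omega)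
  have k7 := key 1 2 4 0 3 (by omega) (by omega) (by omega) (by omega) (by omega)
  have k8 := key 1 3 4 0 2 (by omega) (by omega) (by omega) (by omega) (by omega)
  have k9 := key 2 3 4 0 1 (by omega) (by omega) (by omega) (by omega) (by omega)
  clear key Fp Fq F hpq disj hits hD
  have h0' : q ∈ D 0 ∨ (q ∉ D 0 ∧ p ∈ D 0) := by
    by_cases hh : q ∈ D 0
    · exact Or.inl hh
    · exact Or.inr ⟨hh, h0.resolve_right hh⟩
  have h1' : q ∈ D 1 ∨ (q ∉ D 1 ∧ p ∈ D 1) := by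
    by_cases hh : q ∈ D 1
    · exact Or.inl hh
    · exact Or.inr ⟨hh, h1.resolve_right hh⟩
  have h2' : q ∈ D 2 ∨ (q ∉ D 2 ∧ p ∈ D 2) := by
    by_cases hh : q ∈ D 2
    · exact Or.inl hh
    · exact Or.inr ⟨hh, h2.resolve_right hh⟩
  have h3' : q ∈ D 3 ∨ (q ∉ D 3 ∧ p ∈ D 3) := by
    by_cases hh : q ∈ D 3
    · exact Or.inl hh
    · exact Or.inr ⟨hh, h3.resolve_right hh⟩
  have h4' : q ∈ D 4 ∨ (q ∉ D 4 ∧ p ∈ D 4) := by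
    by_cases hh : q ∈ D 4
    · exact Or.inl hh
    · exact Or.inr ⟨hh, h4.resolve_right hh⟩
  rcases h0' with g0 | ⟨g0, f0⟩ <;> rcases h1' with g1 | ⟨g1, f1⟩ <;>
    rcases h2' with g2 | ⟨g2, f2⟩ <;> rcases h3' with g3 | ⟨g3, f3⟩ <;>
    rcases h4' with g4 | ⟨g4, f4⟩ <;>
    first
    | exact q0 g0 g1 g2 g3
    | exact q1 g0 g1 g2 g4
    | exact q2 g0 g1 g3 g4
    | exact q3 g0 g2 g3 g4
    | exact q4 g1 g2 g3 g4
    | exact p0 f0 f1 f2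
    | exact p1 f0 f1 f3
    | exact p2 f0 f1 f4
    | exact p3 f0 f2 f3
    | exact p4 f0 f2 f4
    | exact p5 f0 f3 f4
    | exact p6 f1 f2 f3
    | exact p7 f1 f2 f4
    | exact p8 f1 f3 f4
    | exact p9 f2 f3 f4
    | exact k0 g0 g1 g2 g3 g4 f3 f4
    | exact k1 g0 g1 g3 g2 g4 f2 f4
    | exact k2 g0 g1 g4 g2 g3 f2 f3
    | exact k3 g0 g2 g3 g1 g4 f1 f4
    | exact k4 g0 g2 g4 g1 g3 f1 f3
    | exact k5 g0 g3 g4 g1 g2 f1 f2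
    | exact k6 g1 g2 g3 g0 g4 f0 f4
    | exact k7 g1 g2 g4 g0 g3 f0 f3
    | exact k8 g1 g3 g4 g0 g2 f0 f2
    | exact k9 g2 g3 g4 g0 g1 f0 f1

lemma bollo2 (D : ℕ → Finset Q) (x y : ℕ → Q) (hD : ∀ j < 7, (D j).card = 2)
    (hits : ∀ i < 7, ∀ j < i, x i ∈ D j ∨ y i ∈ D j)
    (disj : ∀ i < 7, x i ∉ D i ∧ y i ∉ D i) : False := by
  have h := fun j hj => hits 6 (by omega) j hj
  rcases h 5 (by omega) with h5 | h5
  · exact bolloAux D x y hD hits disj (x 6) (y 6) h h5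
  · exact bolloAux D x y hD hits disj (y 6) (x 6) (fun j hj => (h j hj).symm) h5

end bollo


section aut
variable {Q A : Type*} [Fintype Q] [DecidableEq Q] (act : A → Q → Q)

/-- action of a word on a state -/
def runW (w : List A) (x : Q) : Q := w.foldl (fun x s => act s x) x

/-- states missed by a word -/
def comp (w : List A) : Finset Q := (Finset.univ.image (runW act w))ᶜ

lemma runW_append (u v : List A) (x : Q) : runW act (u ++ v) x = runW act v (runW act u x) := by
  simp [runW]

lemma wordImage_eq (R : Finset Q) (w : List A) : wordImage act R w = R.image (runW act w) := by
  induction w generalizing R with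
  | nil => 
    ext x
    simp [wordImage, runW]
  | cons s w ih =>
    rw [wordImage, ih, Finset.image_image]
    rfl

lemma mem_comp (w : List A) (x : Q) : x ∈ comp act w ↔ ∀ y, runW act w y ≠ x := by
  simp [comp]

lemma not_mem_comp (w : List A) (x : Q) : x ∉ comp act w ↔ ∃ y, runW act w y = x := by
  simp [comp]

lemma card_comp (w : List A) :
    (comp act w).card + (wordImage act Finset.univ w).card = Fintype.card Q := by
  rw [wordImage_eq, comp, add_comm, Finset.card_add_card_compl]

lemma image_append (u v : List A) : Finset.univ.image (runW act (u ++ v)) =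
    (Finset.univ.image (runW act u)).image (runW act v) := by
  rw [Finset.image_image]
  congr 1
  ext x
  exact runW_append act u v x

lemma comp_suffix (u v : List A) : comp act v ⊆ comp act (u ++ v) := by
  intro x
  simp only [mem_comp]
  intro h y
  rw [runW_append]
  exact h _

lemma comp_le (u v : List A) : (comp act u).card ≤ (comp act (u ++ v)).card := by
  simp only [comp, Finset.card_compl]
  have : (Finset.univ.image (runW act (u ++ v))).card ≤ (Finset.univ.image (runW act u)).card := by
    rw [image_append]; exact Finset.card_image_le
  omega

lemma comp_lt (u v : List A) (x y : Q) (hx : x ∉ comp act u) (hy : y ∉ comp act u) (hxy : x ≠ y)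
    (h : runW act v x = runW act v y) : (comp act u).card < (comp act (u ++ v)).card := by
  have h1 : (Finset.univ.image (runW act (u ++ v))).card < (Finset.univ.image (runW act u)).card := by
    rw [image_append]
    refine lt_of_le_of_ne Finset.card_image_le ?_
    intro hc
    rw [Finset.card_image_iff] at hc
    simp only [comp, Finset.mem_compl, not_not] at hx hy
    exact hxy (hc hx hy h)
  have h2 : (Finset.univ.image (runW act u)).card ≤ Fintype.card Q := Finset.card_le_univ _
  simp only [comp, Finset.card_compl]
  omega

lemma exists_pair (u v : List A) (h : (comp act u).card < (comp act (u ++ v)).card) :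
    ∃ x y, x ∉ comp act u ∧ y ∉ comp act u ∧ x ≠ y ∧ runW act v x = runW act v y := by
  by_contra! hh
  have : (Finset.univ.image (runW act (u ++ v))).card = (Finset.univ.image (runW act u)).card := by
    rw [image_append]
    apply Finset.card_image_of_injOn
    intro x hx y hy hxy
    by_contra hne
    refine hh x y ?_ ?_ hne hxy
    · simpa [comp] using hx
    · simpa [comp] using hy
  simp only [comp, Finset.card_compl] at h
  omega

/-- shortest continuation reducing the rank -/
lemma chain (u : List A) (h : ∃ v, (comp act u).card < (comp act (u ++ v)).card) :
    ∃ v : List A, ∃ x y : ℕ → Q, (comp act u).card < (comp act (u ++ v)).card ∧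
      (∀ i < v.length, (comp act (u ++ v.take i)).card = (comp act u).card) ∧
      (∀ i < v.length, x i ∉ comp act (u ++ v.take i) ∧ y i ∉ comp act (u ++ v.take i)) ∧
      (∀ i < v.length, x i ≠ y i) ∧
      (∀ i < v.length, runW act (v.drop i) (x i) = runW act (v.drop i) (y i)) ∧
      (∀ i < v.length, ∀ j < i, x i ∈ comp act (u ++ v.take j) ∨ y i ∈ comp act (u ++ v.take j)) ∧
      (∀ i, ∀ h : i < v.length, x (i+1) = act v[i] (x i) ∧ y (i+1) = act v[i] (y i)) := by
  obtain ⟨v, hv, hmin⟩ : ∃ v : List A, (comp act u).card < (comp act (u ++ v)).card ∧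
      ∀ v' : List A, v'.length < v.length → (comp act (u ++ v')).card = (comp act u).card := by
    classical
    have hex : ∃ n, ∃ v : List A, v.length = n ∧ (comp act u).card < (comp act (u ++ v)).card := by
      obtain ⟨v, hv⟩ := h
      exact ⟨_, v, rfl, hv⟩
    obtain ⟨v, hl, hv⟩ := Nat.find_spec hex
    refine ⟨v, hv, fun v' hv' => ?_⟩
    have h1 := Nat.find_min hex (m := v'.length) (by omega)
    have h2 : ¬ (comp act u).card < (comp act (u ++ v')).card := fun h3 => h1 ⟨v', rfl, h3⟩
    have := comp_le act u v'
    omega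
  obtain ⟨x, y, hx, hy, hxy, hrun⟩ := exists_pair act u v hv
  have take_card : ∀ i < v.length, (comp act (u ++ v.take i)).card = (comp act u).card := by
    intro i hi
    exact hmin _ (by simp; omega)
  have nin : ∀ i < v.length, ∀ x, x ∉ comp act u → runW act (v.take i) x ∉ comp act (u ++ v.take i) := by
    intro i hi x hx
    rw [not_mem_comp] at hx ⊢
    obtain ⟨y, rfl⟩ := hx
    exact ⟨y, runW_append _ _ _ _⟩
  have ne : ∀ i < v.length, runW act (v.take i) x ≠ runW act (v.take i) y := by
    intro i hi heq
    have := comp_lt act u (v.take i) x y hx hy hxy heq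
    have := take_card i hi
    omega
  have mer : ∀ i < v.length, runW act (v.drop i) (runW act (v.take i) x) =
      runW act (v.drop i) (runW act (v.take i) y) := by
    intro i hi
    rw [← runW_append, ← runW_append, List.take_append_drop, hrun]
  refine ⟨v, fun i => runW act (v.take i) x, fun i => runW act (v.take i) y, hv, take_card, ?_, ne, mer, ?_, ?_⟩
  · exact fun i hi => ⟨nin i hi x hx, nin i hi y hy⟩
  · intro i hi j hj
    by_contra! hh
    have h1 := comp_lt act (u ++ v.take j) (v.drop i) _ _ hh.1 hh.2 (ne i hi) (mer i hi)
    have h2 := take_card j (by omega)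
    have h3 := hmin (v.take j ++ v.drop i) (by simp; omega)
    rw [List.append_assoc] at h1
    omega
  · intro i hi
    simp only [List.take_succ_eq_append_getElem hi, runW_append]
    exact ⟨rfl, rfl⟩

lemma chain0 (h : ∃ v, 1 ≤ (comp act v).card) : ∃ a : A, 1 ≤ (comp act [a]).card := by
  have h0 : (comp act ([] : List A)) = ∅ := by
    ext x
    simp [mem_comp, runW]
  obtain ⟨v, hv⟩ := h
  obtain ⟨v, x, y, h1, h2, h3, h4, h5, h6, h7⟩ := chain act [] ⟨v, by simp [h0]; simpa using hv⟩
  have hl : v.length < 2 := by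
    by_contra! hl
    have := h6 1 (by omega) 0 (by omega)
    simp [h0] at this
  match v, hl with
  | [], _ => simp at h1
  | [a], _ => 
    refine ⟨a, ?_⟩
    simp [h0] at h1
    simpa using h1

lemma chain1 (u : List A) (hu : (comp act u).card = 1) (h : ∃ v, 2 ≤ (comp act v).card) :
   ∃ v : List A, ∃ x y : ℕ → Q, (comp act u).card < (comp act (u ++ v)).card ∧ v.length ≤ 3 ∧
      (∀ i < v.length, (comp act (u ++ v.take i)).card = (comp act u).card) ∧
      (∀ i < v.length, x i ∉ comp act (u ++ v.take i) ∧ y i ∉ comp act (u ++ v.take i)) ∧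
      (∀ i < v.length, x i ≠ y i) ∧
      (∀ i < v.length, runW act (v.drop i) (x i) = runW act (v.drop i) (y i)) ∧
      (∀ i < v.length, ∀ j < i, x i ∈ comp act (u ++ v.take j) ∨ y i ∈ comp act (u ++ v.take j)) ∧
      (∀ i, ∀ h : i < v.length, x (i+1) = act v[i] (x i) ∧ y (i+1) = act v[i] (y i)) := by
  obtain ⟨v, hv⟩ := h
  obtain ⟨v, x, y, h1, h2, h3, h4, h5, h6, h7⟩ := chain act u ⟨v, by
    have := Finset.card_le_card (comp_suffix act u v); omega⟩
  refine ⟨v, x, y, h1, ?_, h2, h3, h4, h5, h6, h7⟩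
  by_contra! hl
  refine bollo1 (fun i => comp act (u ++ v.take i)) x y ?_ ?_ ?_
  · intro j hj; rw [h2 j (by omega), hu]
  · intro i hi j hj; exact h6 i (by omega) j hj
  · intro i hi; exact h3 i (by omega)

lemma chain2 (u : List A) (hu : (comp act u).card = 2) (h : ∃ v, 3 ≤ (comp act v).card) :
   ∃ v : List A, ∃ x y : ℕ → Q, (comp act u).card < (comp act (u ++ v)).card ∧ v.length ≤ 6 ∧
      (∀ i < v.length, (comp act (u ++ v.take i)).card = (comp act u).card) ∧
      (∀ i < v.length, x i ∉ comp act (u ++ v.take i) ∧ y i ∉ comp act (u ++ v.take i)) ∧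
      (∀ i < v.length, x i ≠ y i) ∧
      (∀ i < v.length, runW act (v.drop i) (x i) = runW act (v.drop i) (y i)) ∧
      (∀ i < v.length, ∀ j < i, x i ∈ comp act (u ++ v.take j) ∨ y i ∈ comp act (u ++ v.take j)) ∧
      (∀ i, ∀ h : i < v.length, x (i+1) = act v[i] (x i) ∧ y (i+1) = act v[i] (y i)) := by
  obtain ⟨v, hv⟩ := h
  obtain ⟨v, x, y, h1, h2, h3, h4, h5, h6, h7⟩ := chain act u ⟨v, by
    have := Finset.card_le_card (comp_suffix act u v); omega⟩
  refine ⟨v, x, y, h1, ?_, h2, h3, h4, h5, h6, h7⟩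
  by_contra! hl
  refine bollo2 (fun i => comp act (u ++ v.take i)) x y ?_ ?_ ?_
  · intro j hj; rw [h2 j (by omega), hu]
  · intro i hi j hj; exact h6 i (by omega) j hj
  · intro i hi; exact h3 i (by omega)

lemma two_le {D : Finset Q} {x y : Q} (hx : x ∈ D) (hy : y ∈ D) (h : x ≠ y) : 2 ≤ D.card := by
  rw [← Finset.card_pair h]
  apply Finset.card_le_card
  intro z hz
  simp at hz
  rcases hz with rfl | rfl <;> assumption

lemma mem_comp_snoc (w : List A) (s : A) (x : Q) :
    x ∈ comp act (w ++ [s]) ↔ ∀ y, act s y = x → y ∈ comp act w := by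
  constructor
  · intro h y hy
    by_contra hc
    rw [not_mem_comp] at hc
    obtain ⟨z, rfl⟩ := hc
    rw [mem_comp] at h
    exact h z (by rw [runW_append]; exact hy)
  · intro h
    rw [mem_comp]
    intro z hz
    rw [runW_append] at hz
    have := h (runW act w z) hz
    rw [mem_comp] at this
    exact this z rfl

lemma case3 (h : ∃ v, 3 ≤ (comp act v).card) : ∃ v : List A, v.length ≤ 9 ∧ 3 ≤ (comp act v).card := by
  by_contra! hB
  have hB3 : ∀ w : List A, w.length ≤ 3 → (comp act w).card ≤ 1 := by
    intro w hw
    by_contra! hc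
    have := hB w (by omega)
    obtain ⟨v, x, y, h1, h2, -⟩ := chain2 act w (by omega) h
    have := hB (w ++ v) (by simp; omega)
    omega
  obtain ⟨W, hW⟩ := h
  obtain ⟨a, ha⟩ := chain0 act ⟨W, by omega⟩
  have ha1 : (comp act [a]).card = 1 := le_antisymm (hB3 _ (by simp)) ha
  obtain ⟨v, X, Y, h1, h2, h3, h4, h5, h6, h7, h8⟩ := chain1 act [a] ha1 ⟨W, by omega⟩
  have hv : v.length = 3 := by
    by_contra hne
    have := hB3 ([a] ++ v) (by simp; omega)
    omega
  obtain ⟨s1, s2, s3, rfl⟩ := List.length_eq_three.1 hv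
  have g0 := (h3 0 (by simp)).trans ha1
  have g1 := (h3 1 (by simp)).trans ha1
  have g2 := (h3 2 (by simp)).trans ha1
  have g3 := h7 2 (by simp) 0 (by simp)
  have g4 := h7 2 (by simp) 1 (by simp)
  have g5 := h4 2 (by simp)
  have g6 := h6 2 (by simp)
  have g7 := h7 1 (by simp) 0 (by simp)
  have g8 := h4 1 (by simp)
  have g9 := h5 2 (by simp)
  clear h2 h3 h4 h5 h6 h7 h8 h1 hv
  simp only [List.take_zero, List.take_succ_cons, List.append_nil, List.drop_succ_cons, List.drop_zero] at g0 g1 g2 g3 g4 g5 g6 g7 g8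
  obtain ⟨o, ho⟩ := Finset.card_eq_one.1 g0
  obtain ⟨i, hi⟩ := Finset.card_eq_one.1 g1
  obtain ⟨t, ht⟩ := Finset.card_eq_one.1 g2
  simp only [ho, hi, ht, Finset.mem_singleton] at g3 g4 g5 g7 g8
  have hP2 : (X 2 = o ∧ Y 2 = i) ∨ (X 2 = i ∧ Y 2 = o) := by grind
  have oi : o ≠ i := by grind
  have tO : t ≠ o := by grind
  have tI : t ≠ i := by grind
  have hs3 : act s3 o = act s3 i := by
    have : act s3 (X 2) = act s3 (Y 2) := g6
    rcases hP2 with ⟨h1, h2⟩ | ⟨h1, h2⟩ <;> simp_all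
  clear g3 g4 g5 g6 g7 g8 g9 hP2 X Y g0 g1 g2
  -- one-letter merges
  have M1 : ∀ w : List A, w.length ≤ 2 → (comp act w).Nonempty → ∀ s x y, act s x = act s y → x ≠ y →
      x ∈ comp act w ∨ y ∈ comp act w := by
    intro w hw hne s x y hxy hn
    by_contra! hh
    have := comp_lt act w [s] x y hh.1 hh.2 hn hxy
    have := hB3 (w ++ [s]) (by simp; omega)
    have := hne.card_pos
    omega
  have M2 : ∀ w : List A, w.length ≤ 2 → ∀ x ∈ comp act w, x = o ∨ x = i := by
    intro w hw x hx
    by_contra! hh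
    have h1 := hB3 w (by omega)
    rcases M1 w hw ⟨x, hx⟩ s3 o i hs3 oi with h2 | h2
    · have := two_le hx h2 hh.1; omega
    · have := two_le hx h2 hh.2; omega
  have T1 : ∀ w : List A, w.length ≤ 2 → t ∉ comp act w := by
    intro w hw hx
    rcases M2 w hw t hx with h | h
    · exact tO h
    · exact tI h
  have nonsurj : ∀ s : A, ¬ Function.Injective (act s) → ∃ m, m ∈ comp act [s] := by
    intro s hs
    have : ¬ Function.Surjective (act s) := fun h => hs (Finite.injective_iff_surjective.2 h)
    simp only [Function.Surjective, not_forall, not_exists] at this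
    obtain ⟨m, hm⟩ := this
    exact ⟨m, (mem_comp _ _ _).2 hm⟩
  have injmem : ∀ s : A, Function.Injective (act s) → ∀ w x, x ∈ comp act w → act s x ∈ comp act (w ++ [s]) := by
    intro s hs w x hx
    rw [mem_comp_snoc]
    intro y hy
    rwa [hs hy]
  have p2 : Function.Injective (act s2) := by
    by_contra hn
    obtain ⟨m, hm⟩ := nonsurj s2 hn
    have h1 := comp_suffix act [a, s1] [s2] hm
    simp only [List.cons_append, List.nil_append] at h1 ht
    rw [ht, Finset.mem_singleton] at h1
    exact T1 _ (by simp) (h1 ▸ hm)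
  have s2i : act s2 i = t := by
    have h1 := injmem s2 p2 [a, s1] i (by simp only [List.cons_append, List.nil_append] at hi; simp [hi])
    simp only [List.cons_append, List.nil_append] at h1 ht
    rwa [ht, Finset.mem_singleton] at h1
  have L : ∀ s : A, i ∉ comp act [s] := by
    intro s hs
    have h1 := injmem s2 p2 [s] i hs
    rw [s2i] at h1
    exact T1 _ (by simp) h1
  have nmiss0 : ∀ s : A, ¬ Function.Injective (act s) → comp act [s] = {o} := by
    intro s hs
    obtain ⟨m, hm⟩ := nonsurj s hs
    have h1 : ∀ m ∈ comp act [s], m = o := by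
      intro m hm
      rcases M2 _ (by simp) m hm with rfl | rfl
      · rfl
      · exact absurd hm (L s)
    ext x
    rw [Finset.mem_singleton]
    refine ⟨h1 x, ?_⟩
    rintro rfl
    rwa [← h1 m hm]
  have nmiss : ∀ s : A, ¬ Function.Injective (act s) → ∀ x, act s x ≠ o := by
    intro s hs x
    have : o ∈ comp act [s] := by simp [nmiss0 s hs]
    rw [mem_comp] at this
    exact this x
  have p1 : Function.Injective (act s1) := by
    by_contra hn
    have hm : o ∈ comp act [s1] := by simp [nmiss0 s1 hn]
    have h1 := comp_suffix act [a] [s1] hm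
    rw [hi, Finset.mem_singleton] at h1
    exact oi h1
  have s1o : act s1 o = i := by
    have h1 := injmem s1 p1 [a] o (by simp [ho])
    rwa [hi, Finset.mem_singleton] at h1
  have n3 : ¬ Function.Injective (act s3) := fun h => oi (h hs3)
  have npair : ∀ s : A, ∀ x y, act s x = act s y → x ≠ y → (x = o ∧ y = i) ∨ (x = i ∧ y = o) := by
    intro s x y hxy hn
    have h1 := M1 [a] (by simp) (by simp [ho]) s x y hxy hn
    have h2 := M1 ([a] ++ [s1]) (by simp) (by rw [hi]; simp) s x y hxy hn
    rw [ho, Finset.mem_singleton, Finset.mem_singleton] at h1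
    rw [hi, Finset.mem_singleton, Finset.mem_singleton] at h2
    grind
  have ctx : Ctx act o i t (fun s => Function.Injective (act s))
      (fun l d => ∃ w : List A, w.length ≤ l ∧ d ∈ comp act w)
      (fun l d e => d ≠ e ∧ ∃ w : List A, w.length ≤ l ∧ d ∈ comp act w ∧ e ∈ comp act w) := by
    have snocn : ∀ s : A, ¬ Function.Injective (act s) → ∀ w, o ∈ comp act (w ++ [s]) := by
      intro s hs w
      apply comp_suffix
      simp [nmiss0 s hs]
    have snocn' : ∀ s : A, ∀ w e, e ∈ comp act w → e ≠ o → e ≠ i →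
        act s e ∈ comp act (w ++ [s]) := by
      intro s w e he h1 h2
      rw [mem_comp_snoc]
      intro y hy
      by_cases hye : y = e
      · rwa [hye]
      · have := npair s y e hy hye
        tauto
    constructor
    · exact oi
    · exact tO
    · exact tI
    · intro s hs x y hxy; exact hs hxy
    · intro s hs
      exact M2 ([a] ++ [s]) (by simp) _ (injmem s hs [a] o (by simp [ho]))
    · intro s hs
      simp only [Function.Injective, not_forall] at hs
      obtain ⟨x, y, hxy, hn⟩ := hs
      rcases npair s x y hxy hn with ⟨rfl, rfl⟩ | ⟨rfl, rfl⟩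
      · exact hxy
      · exact hxy.symm
    · intro s hs x y hxy
      by_cases hn : x = y
      · exact Or.inl hn
      · have := npair s x y hxy hn
        tauto
    · exact nmiss
    · exact ⟨s1, p1, s1o⟩
    · exact ⟨s2, p2, s2i⟩
    · exact ⟨s3, n3⟩
    · rintro l d e ⟨h1, w, h2, h3, h4⟩
      exact ⟨h1.symm, w, h2, h4, h3⟩
    · intro l d e h; exact h.1
    · rintro s hs l d e ⟨h1, w, h2, h3, h4⟩
      exact ⟨fun h => h1 (hs h), w ++ [s], by simpa using h2, injmem s hs _ _ h3, injmem s hs _ _ h4⟩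
    · rintro s hs l d e ⟨h1, w, h2, h3, h4⟩ h5 h6
      exact ⟨(nmiss s hs e).symm, w ++ [s], by simpa using h2, snocn s hs w, snocn' s w e h4 h5 h6⟩
    · rintro s hs l ⟨h1, w, h2, h3, h4⟩
      refine ⟨(nmiss s hs o).symm, w ++ [s], by simpa using h2, snocn s hs w, ?_⟩
      rw [mem_comp_snoc]
      intro y hy
      by_cases hye : y = o
      · rwa [hye]
      · have := npair s y o hy hye
        have : y = i := by tauto
        rwa [this]
    · exact ⟨[a] ++ [s1], by simp, by rw [hi]; simp⟩
    · rintro s hs l d ⟨w, h2, h3⟩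
      exact ⟨w ++ [s], by simpa using h2, injmem s hs _ _ h3⟩
    · rintro s hs l d ⟨w, h2, h3⟩ h5 h6
      exact ⟨(nmiss s hs d).symm, w ++ [s], by simpa using h2, snocn s hs w, snocn' s w d h3 h5 h6⟩
    · intro hinv
      have c1 : ∀ w : List A, ∀ x ∈ comp act w, x = o ∨ x = i ∨ x = t := by
        intro w
        induction w using List.reverseRecOn with
        | nil =>
          intro x hx
          rw [mem_comp] at hx
          exact absurd rfl (hx x)
        | append_singleton w s ih =>
          intro x hx
          rw [mem_comp_snoc] at hx
          by_cases hxo : x = o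
          · exact Or.inl hxo
          have : ∃ y, act s y = x := by
            by_cases hs : Function.Injective (act s)
            · exact Finite.injective_iff_surjective.1 hs x
            · have : x ∉ comp act [s] := by simpa [nmiss0 s hs] using hxo
              exact (not_mem_comp _ _ _).1 this
          obtain ⟨y, rfl⟩ := this
          exact hinv s y (ih y (hx y rfl))
      have c2 : ∀ w : List A, (runW act w o = o ∨ runW act w o = i ∨ runW act w o = t) := by
        intro w
        induction w using List.reverseRecOn with
        | nil => exact Or.inl rfl
        | append_singleton w s ih =>
          rw [runW_append]
          exact hinv s _ ih
      have c3 : comp act W ⊆ ({o, i, t} : Finset Q) := by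
        intro x hx
        simpa using c1 W x hx
      have c4 : comp act W = ({o, i, t} : Finset Q) := by
        apply Finset.eq_of_subset_of_card_le c3
        exact Finset.card_le_three.trans hW
      have c5 : runW act W o ∈ comp act W := by
        rw [c4]; simpa using c2 W
      exact (mem_comp _ _ _).1 c5 o rfl
  -- second phase
  obtain ⟨u, hul, huo, hua⟩ : ∃ u : List A, u.length = 4 ∧ o ∈ comp act u ∧ act s3 t ∈ comp act u := by
    refine ⟨([a] ++ [s1, s2]) ++ [s3], by simp, ?_, ?_⟩
    · apply comp_suffix
      simp [nmiss0 s3 n3]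
    · rw [mem_comp_snoc, ht]
      intro y hy
      rw [Finset.mem_singleton]
      by_contra hne
      have := npair s3 y t hy hne
      tauto
  have hne := nmiss s3 n3 t
  have hu2 : (comp act u).card = 2 := by
    have := two_le huo hua hne.symm
    have := hB u (by omega)
    omega
  obtain ⟨v, X, Y, h1, h2, h3, h4, h5, h6, h7, h8⟩ := chain2 act u hu2 ⟨W, hW⟩
  have hv : v.length = 6 := by
    by_contra hne
    have := hB (u ++ v) (by simp; omega)
    omega
  have H : ∀ k < 6, ∀ l d e, (d ≠ e ∧ ∃ w : List A, w.length ≤ l ∧ d ∈ comp act w ∧ e ∈ comp act w) →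
      l ≤ 3 + k → (X k = d ∨ X k = e ∨ Y k = d ∨ Y k = e) := by
    rintro k hk l d e ⟨hde, w, hw, hd, he⟩ hl
    have hw2 : (comp act w).card ≤ 2 := by
      have := hB w (by omega)
      omega
    have hsub : ({d, e} : Finset Q) = comp act w := by
      apply Finset.eq_of_subset_of_card_le
      · intro x hx
        simp only [Finset.mem_insert, Finset.mem_singleton] at hx
        rcases hx with rfl | rfl <;> assumption
      · rwa [Finset.card_pair hde]
    by_contra! hh
    have := comp_lt act w (v.drop k) (X k) (Y k) (by rw [← hsub]; simp; tauto) (by rw [← hsub]; simp; tauto)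
      (h5 k (by omega)) (h6 k (by omega))
    have := hB (w ++ v.drop k) (by simp; omega)
    have := two_le hd he hde
    omega
  have DD : ∀ k < 6, ∃ d e, d ≠ e ∧ comp act (u ++ v.take k) = {d, e} := by
    intro k hk
    have := h3 k (by omega)
    rw [hu2] at this
    exact Finset.card_eq_two.1 this
  obtain ⟨d1, e1, n1, hd1⟩ := DD 1 (by omega)
  obtain ⟨d2, e2, n2, hd2⟩ := DD 2 (by omega)
  obtain ⟨d3, e3, n3', hd3⟩ := DD 3 (by omega)
  have hlen : ∀ k, (u ++ v.take k).length ≤ 4 + k := by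
    intro k; simp; omega
  -- the last two pairs
  have P5 : (X 5 = o ∧ Y 5 = i) ∨ (X 5 = i ∧ Y 5 = o) := by
    have q1 := h6 5 (by omega)
    have q2 : (v.drop 5).length = 1 := by simp [hv]
    obtain ⟨s, hs⟩ := List.length_eq_one_iff.1 q2
    rw [hs] at q1
    exact npair s _ _ q1 (h5 5 (by omega))
  obtain ⟨z, P4⟩ : ∃ z, (X 4 = o ∧ Y 4 = z) ∨ (X 4 = z ∧ Y 4 = o) := by
    obtain ⟨q1, q2⟩ := h8 4 (by omega)
    have inj : Function.Injective (act v[4]) := by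
      by_contra hn
      have r1 := nmiss _ hn (X 4)
      have r2 := nmiss _ hn (Y 4)
      rw [← q1] at r1
      rw [← q2] at r2
      tauto
    have q3 := ctx.po _ inj
    have q4 : act v[4] o = act v[4] (X 4) ∨ act v[4] o = act v[4] (Y 4) := by
      rw [← q1, ← q2]
      change _ = X 5 ∨ _ = Y 5
      clear * - q3 P5
      grind
    rcases q4 with q4 | q4
    · exact ⟨Y 4, Or.inl ⟨(inj q4).symm, rfl⟩⟩
    · exact ⟨X 4, Or.inr ⟨rfl, (inj q4).symm⟩⟩
  have zo : z ≠ o := by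
    have := h5 4 (by omega)
    grind
  have zi : z ≠ i := by
    have q1 := h4 4 (by omega)
    have q2 := h7 5 (by omega) 4 (by omega)
    rintro rfl
    clear * - P4 P5 q1 q2
    grind
  have disj : ∀ k < 6, ∀ d e, comp act (u ++ v.take k) = {d, e} →
      ¬ (X k = d ∨ X k = e ∨ Y k = d ∨ Y k = e) := by
    intro k hk d e hde
    have := h4 k (by omega)
    rw [hde] at this
    simp only [Finset.mem_insert, Finset.mem_singleton] at this
    tauto
  have RD : ∀ k d e, d ≠ e → comp act (u ++ v.take k) = {d, e} → 
      (d ≠ e ∧ ∃ w : List A, w.length ≤ 4 + k ∧ d ∈ comp act w ∧ e ∈ comp act w) := by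
    intro k d e hde hc
    exact ⟨hde, _, hlen k, by simp [hc], by simp [hc]⟩
  refine ctx.final (α := act s3 t) (z := z) ⟨hne.symm, u, by omega, huo, hua⟩ (RD 1 d1 e1 n1 hd1)
    (RD 2 d2 e2 n2 hd2) (RD 3 d3 e3 n3' hd3) zo zi (disj 1 (by omega) _ _ hd1)
    (disj 2 (by omega) _ _ hd2) (disj 3 (by omega) _ _ hd3) (H 1 (by omega)) (H 2 (by omega))
    (H 3 (by omega)) ?_ ?_
  · intro l d e hr hl
    have := H 4 (by omega) l d e hr hl
    clear * - this P4
    grind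
  · intro l d e hr hl
    have := H 5 (by omega) l d e hr hl
    clear * - this P5
    grind

lemma case2 (h : ∃ v, 2 ≤ (comp act v).card) : ∃ v : List A, v.length ≤ 4 ∧ 2 ≤ (comp act v).card := by
  obtain ⟨W, hW⟩ := h
  obtain ⟨a, ha⟩ := chain0 act ⟨W, by omega⟩
  by_cases h2 : 2 ≤ (comp act [a]).card
  · exact ⟨[a], by simp, h2⟩
  · obtain ⟨v, X, Y, h1, h2, -⟩ := chain1 act [a] (by omega) ⟨W, by omega⟩
    exact ⟨[a] ++ v, by simp; omega, by omega⟩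

end aut

theorem stmt_0 {Q A : Type*} [Fintype Q] [DecidableEq Q] (act : A → Q → Q)
    (c : ℕ) (hc : c ≤ 3)
    (h : ∃ w : List A, (wordImage act Finset.univ w).card ≤ Fintype.card Q - c) :
    ∃ w : List A, w.length ≤ c ^ 2 ∧
      (wordImage act Finset.univ w).card ≤ Fintype.card Q - c := by
  rcases isEmpty_or_nonempty Q with hQ | hQ
  · refine ⟨[], by simp, ?_⟩
    simp [wordImage]
  obtain ⟨w, hw⟩ := h
  have hpos : 0 < (wordImage act Finset.univ w).card := by
    rw [wordImage_eq]
    simp [Finset.card_pos]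
  have hk : c ≤ (comp act w).card := by
    have := card_comp act w
    omega
  suffices hs : ∃ w : List A, w.length ≤ c ^ 2 ∧ c ≤ (comp act w).card by
    obtain ⟨w, h1, h2⟩ := hs
    refine ⟨w, h1, ?_⟩
    have := card_comp act w
    omega
  interval_cases c
  · exact ⟨[], by simp, by simp⟩
  · obtain ⟨a, ha⟩ := chain0 act ⟨w, hk⟩
    exact ⟨[a], by simp, ha⟩
  · exact case2 act ⟨w, hk⟩
  · exact case3 act ⟨w, hk⟩
end

section
/- Let (Q, Σ) be a DFA with n = |Q| ≤ 4. If there exists a word w over Σ such that |Qw| = 1, then there exists a word w over Σ with |w| ≤ (n−1)² and |Qw| = 1. -/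
namespace Cerny

/-- membership of a mask in a family of masks, encoded as a number -/
def tb (v m : Nat) : Bool := Nat.beq (Nat.land (Nat.shiftRight v m) 1) 1

/-- image of the subset with mask `m` under the letter with code `l` -/
def img (l m : Nat) : Nat := Nat.land (Nat.shiftRight l (Nat.mul 4 m)) 15

/-- images of one mask under a list of letters, put in front of `acc` -/
def imgs (m : Nat) (acc : List Nat) : List Nat → List Nat
  | [] => acc
  | l :: L => img l m :: imgs m acc L

/-- images of all masks in a list under all letters -/
def expand (L : List Nat) : List Nat → List Nat
  | [] => []
  | m :: fr => imgs m (expand L fr) L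

/-- breadth-first search for a mask in the family `goal`; `fresh` walks through a layer. -/
def fresh (goal : Nat) (K : Nat → List Nat → Bool) (v : Nat) (acc : List Nat) : List Nat → Bool
  | [] => K v acc
  | m :: ms =>
    bif tb goal m then true
    else bif tb v m then fresh goal K v acc ms
    else fresh goal K (Nat.lor v (Nat.shiftLeft 1 m)) (m :: acc) ms

def bfs (goal : Nat) (L : List Nat) : Nat → Nat → List Nat → Bool
  | 0, _, _ => false
  | k + 1, v, fr => fresh goal (bfs goal L k) v [] (expand L fr)

/-- masks of size one -/
def singles : Nat := 278
/-- masks of size one or two -/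
def smalls : Nat := 278 + 5736

def leaf (L : List Nat) : Bool :=
  bif bfs smalls L 3 0 [15] then true else bfs singles L 9 0 [15]

def hits (D p : Nat) : List Nat → Bool
  | [] => false
  | l :: L => bif tb D (img l p) then true else hits D p L

def cstep (L : List Nat) (D p : Nat) : Nat :=
  bif hits D p L then Nat.lor D (Nat.shiftLeft 1 p) else D

def pairs : List Nat := [3, 5, 6, 9, 10, 12]

def closure (L : List Nat) : Nat → Nat → Nat
  | 0, D => D
  | k + 1, D => closure L k (pairs.foldl (cstep L) D)

def usefulAux (D l : Nat) : List Nat → Bool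
  | [] => false
  | p :: ps =>
    bif tb D p then usefulAux D l ps
    else bif tb D (img l p) then true else usefulAux D l ps

def useful (D l : Nat) : Bool := usefulAux D l pairs

def splitC (D : Nat) (K : List Nat → List Nat → Bool) (U N : List Nat) : List Nat → Bool
  | [] => K U N
  | c :: C => bif useful D c then splitC D K (c :: U) N C else splitC D K U (c :: N) C

def proc (K : Nat → List Nat → Bool) (N : List Nat) : List Nat → Bool
  | [] => true
  | u :: us => bif K u (us ++ N) then proc K N us else false

def okD (D : Nat) (L : List Nat) : Bool :=
  (tb D 1 && tb D 2 && tb D 4 && tb D 8) && (pairs.any fun p => !tb D p) &&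
    L.all fun l => !useful D l

def search : Nat → List Nat → List Nat → Bool
  | 0, _, _ => false
  | k + 1, L, C =>
    bif okD (closure L 6 singles) L then
      splitC (closure L 6 singles)
        (fun U N => proc (fun u C' => bif leaf (u :: L) then true else search k (u :: L) C') N U)
        [] [] C
    else false

def filt (a : Nat) : List Nat → List Nat
  | [] => []
  | c :: C => bif leaf [c, a] then filt a C else c :: filt a C

/-- the mask of the image of the mask `m` under the function `0 ↦ a, 1 ↦ b, 2 ↦ c, 3 ↦ d` -/
def bitIf (m i a : Nat) : Nat := bif tb m i then Nat.shiftLeft 1 a else 0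
def tab (a b c d m : Nat) : Nat :=
  Nat.lor (Nat.lor (bitIf m 0 a) (bitIf m 1 b)) (Nat.lor (bitIf m 2 c) (bitIf m 3 d))
def codeAux (a b c d : Nat) : Nat → Nat
  | 0 => 0
  | k + 1 => Nat.lor (codeAux a b c d k) (Nat.shiftLeft (tab a b c d k) (Nat.mul 4 k))
def code (a b c d : Nat) : Nat := codeAux a b c d 16

def allCodes : List Nat :=
  [1229782938247303440, 3689348809874280720, 6148914685796225296, 11068046437640114448,
   3689311285317603600, 3689067335470158096, 8608161557889814800, 13527293309733703952,
   6148839632387969296, 8608124029038235920, 6148633211964756240, 15986821656804069648,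
   11067896326528700688, 13527180723178967312, 15986746599100911888, 11067764964953952528,
   3679778519502631440, 3689347710933086736, 8598909167539925520, 13518040919383814672,
   3689348668696179216, 3617008641903833616, 8536140247718834704, 13455271999562723856,
   8598835213626520080, 8536065336042336784, 8526570099653751312, 18364758544493064720,
   13517891907767251472, 13455122030183068176, 18364683486789906960, 13445701852642947600,
   6129774100757959696, 8589338872873309200, 6148913587425465360, 15968036500639142928,
   8589302447811482640, 8516999804414481424, 8536102865464349712, 18355225778678027280,
   6148914399161898000, 8536140102262608912, 6076574518398440464, 15914837730028442640,
   15967887489022579728, 18355113192123290640, 15914687906675446800, 15895697433898275856,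
   11029765263268616208, 13489330035383965712, 15948895911305910288, 11068045340410222608,
   13489293610322139152, 13416990966925137936, 18336085189344794640, 13455234618449106960,
   15948821957392504848, 18336047660493215760, 15876556843419736080, 15914762965519472656,
   11068045860093335568, 13455271563194046480, 15914837439115991056, 10995706271387654160,
   3544668469065756960, 3689348741693780256, 8463800147895202080, 13382931899739091232,
   3689346607127605536, 3684563667122270496, 8603693211352969504, 13522824963196858656,
   8463725163205374240, 8603620361229316384, 8459015074435313952, 18297203519274627360,
   13382781857346105632, 13522677055370047776, 18297128461571469600, 13378146827424510240,
   3688785856198418976, 3689330050029658656, 8607898843330191904, 13527030595174081056,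
   3689348805865644576, 2459565876494606880, 7378697619748561440, 12297829371592450592,
   8607842550052823584, 7378622570635207200, 7378134670940316192, 17216323115779629600,
   13526899244193554976, 12297679264775938592, 17216248058076471840, 12297266423929512480,
   8444659631576409120, 8589321212506760224, 8463781457338393632, 18282904370552071200,
   8589337769353045024, 7359557039005262880, 7378695421866173472, 17197818335079851040,
   8463799929710863392, 7378697337392358432, 7234017283807667232, 17072280495437669408,
   18282773019571545120, 17197670427253040160, 17072130672084673568, 17053140199307502624,
   13344650794087065632, 13489312375017416736, 18263763781218838560, 13382913210323150880,
   13489328931863701536, 12259548201515919392, 17178677745746618400, 12297827174850930720,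
   18263707487941470240, 17178604895622965280, 17033999608828962848, 17072205730928699424,
   13382931390642300960, 12297828798323796000, 17072280204525217824, 12153149036796880928,
   5859553999884210496, 8319119802791711040, 6148914618154701120, 15697817430557544768,
   8319082346953462080, 8314334728759169344, 8603657890619871552, 18152560703022715200,
   6148910276009021760, 8603691004312441152, 6144129543616876864, 15982388632078274880,
   15697667388164559168, 18152448116467978560, 15982242931830968640, 15693032358242963776,
   8309549581139534400, 8319101111664468544, 8598891507712352832, 18147794320115196480,
   8319119730063598144, 7089336938131513920, 7378697483387560512, 16927600295790404160,
   8598905856979132992, 7378693214255211072, 7369127334244540992, 17207386422705939008,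
   18147662969134670400, 16927450326410748480, 17207240722458632768, 16918030148870627904,
   6147788774149538880, 8607335885359367232, 6148895926524134464, 15986033513125200960,
   8607317120933577792, 7377571712396837952, 7378660100059317312, 17215797686660383808,
   6148914673770316864, 7378697611731289152, 4919131752989213760, 14757395239497122880,
   15985902162144674880, 17215685100105647168, 14757245141270414400, 14756269341880632384,
   15659536324905519168, 18119083436115347520, 15948878251478337600, 15697798741141604416,
   18119064671689558080, 16889319263152818240, 17178642425013520448, 16927562914676787264,
   15948892600745117760, 17178675538706090048, 14719114078010525760, 14757390843732346944,
   15697816921460754496, 16927599859421726784, 14757394674784716864, 14468034567615334464,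
   10489325061521117568, 12948890864428618112, 15408456740350562688, 11068046371076542848,
   12948853408590369152, 12944105790396076416, 17863200012815733120, 13522789643541713280,
   15408381755660734848, 17863162483964154240, 15403671666890674560, 15982317990612078976,
   11068037613771854208, 13522818342075273600, 15982384217997218176, 11063261296606089600,
   12939320642776441472, 12948872173301375616, 17858433629908214400, 13518023260634194560,
   12948890791700505216, 11719107999768420992, 16638239605583422080, 12297829236309402240,
   17858377336630846080, 16638164693906924160, 16628669457518338688, 17207315781239743104,
   13518033194741965440, 12297820552018043520, 17207382008624882304, 12288259087233753728,
   15389316224031769728, 17848863335241598080, 15408438049793754240, 15968018841889522816,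
   17848844570815808640, 16619099162279068800, 16638202223328937088, 17197783015424705664,
   15408456522166224000, 16638239460127196288, 14178673876263027840, 14757394966775121024,
   15968028775997293696, 17197811713958265984, 14757386428510422144, 14738254668489081984,
   11065794610051778688, 13525341721261607040, 15984907597183551616, 11068027679513086080,
   13525322956835817600, 12295577548299077760, 17214671770718734464, 12297791853048268928,
   15984851303906183296, 17214634241867155584, 14755143424793675904, 14757320200118634624,
   11068046409579661440, 12297829347540633728, 14757395223462578304, 9838263505978427520]

def startCodes : List Nat :=
  [1229782938247303440, 6148914685796225296, 11068046437640114448, 6148839632387969296,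
   6148633211964756240, 15986821656804069648, 11067896326528700688, 15986746599100911888,
   11067764964953952528, 6147788774149538880, 6148895926524134464, 15986033513125200960,
   6148914673770316864, 4919131752989213760, 14757395239497122880, 15985902162144674880,
   14757245141270414400, 14756269341880632384, 11065794610051778688, 15984907597183551616,
   11068027679513086080, 15984851303906183296, 14755143424793675904, 14757320200118634624,
   11068046409579661440, 14757395223462578304, 9838263505978427520]

def top : List Nat → Bool
  | [] => true
  | a :: as => bif (bif leaf [a] then true else search 4 [a] (filt a allCodes)) then top as else false

set_option maxRecDepth 100000 in
theorem top_true : top startCodes = true := by decide +kernel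

end Cerny
namespace Cerny

def imgw (m : Nat) : List Nat → Nat
  | [] => m
  | l :: w => imgw (img l m) w

theorem mem_imgs {m x : Nat} {acc : List Nat} : ∀ {L : List Nat}, x ∈ imgs m acc L →
    x ∈ acc ∨ ∃ l ∈ L, x = img l m
  | [], h => Or.inl h
  | l :: L, h => by
    simp only [imgs, List.mem_cons] at h
    rcases h with h | h
    · exact Or.inr ⟨l, by simp, h⟩
    · rcases mem_imgs h with h | ⟨l', h1, h2⟩
      · exact Or.inl h
      · exact Or.inr ⟨l', by simp [h1], h2⟩

theorem mem_expand {L : List Nat} {x : Nat} : ∀ {fr : List Nat}, x ∈ expand L fr →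
    ∃ m ∈ fr, ∃ l ∈ L, x = img l m
  | [], h => by simp [expand] at h
  | m :: fr, h => by
    rcases mem_imgs h with h | ⟨l, h1, h2⟩
    · obtain ⟨m', h1, h2⟩ := mem_expand h
      exact ⟨m', by simp [h1], h2⟩
    · exact ⟨m, by simp, l, h1, h2⟩

theorem fresh_spec {goal : Nat} {K : Nat → List Nat → Bool} :
    ∀ (ms : List Nat) (v : Nat) (acc : List Nat), fresh goal K v acc ms = true →
    (∃ m ∈ ms, tb goal m = true) ∨ ∃ v' acc', K v' acc' = true ∧ ∀ x ∈ acc', x ∈ acc ∨ x ∈ ms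
  | [], v, acc, h => Or.inr ⟨v, acc, h, fun x hx => Or.inl hx⟩
  | m :: ms, v, acc, h => by
    simp only [fresh] at h
    cases hg : tb goal m with
    | true => exact Or.inl ⟨m, by simp, hg⟩
    | false =>
      rw [hg] at h
      simp only [cond_false] at h
      cases hv : tb v m with
      | true =>
        rw [hv] at h
        rcases fresh_spec ms _ _ h with ⟨m', h1, h2⟩ | ⟨v', acc', h1, h2⟩
        · exact Or.inl ⟨m', by simp [h1], h2⟩
        · refine Or.inr ⟨v', acc', h1, fun x hx => ?_⟩
          rcases h2 x hx with h | h <;> simp [h]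
      | false =>
        rw [hv] at h
        rcases fresh_spec ms _ _ h with ⟨m', h1, h2⟩ | ⟨v', acc', h1, h2⟩
        · exact Or.inl ⟨m', by simp [h1], h2⟩
        · refine Or.inr ⟨v', acc', h1, fun x hx => ?_⟩
          rcases h2 x hx with h | h
          · rcases List.mem_cons.1 h with h | h <;> simp [h]
          · simp [h]

theorem bfs_spec {goal : Nat} {L : List Nat} : ∀ (k v : Nat) (fr : List Nat),
    bfs goal L k v fr = true →
    ∃ m ∈ fr, ∃ w : List Nat, w.length ≤ k ∧ (∀ l ∈ w, l ∈ L) ∧ tb goal (imgw m w) = true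
  | 0, _, _, h => by simp [bfs] at h
  | k + 1, v, fr, h => by
    rcases fresh_spec _ _ _ h with ⟨x, h1, h2⟩ | ⟨v', acc', h1, h2⟩
    · obtain ⟨m, hm, l, hl, rfl⟩ := mem_expand h1
      exact ⟨m, hm, [l], by simp, by simpa using hl, h2⟩
    · obtain ⟨x, hx, w, hw, hw2, hw3⟩ := bfs_spec k _ _ h1
      have := h2 x hx
      simp only [List.not_mem_nil, false_or] at this
      obtain ⟨m, hm, l, hl, rfl⟩ := mem_expand this
      exact ⟨m, hm, l :: w, by simpa using hw, by simpa using ⟨hl, hw2⟩, hw3⟩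

/-- The set of letters `Sig` has no short reset word. -/
def Bad (Sig : Nat → Prop) : Prop :=
  (∀ w : List Nat, w.length ≤ 3 → (∀ l ∈ w, Sig l) → tb smalls (imgw 15 w) = false) ∧
  (∀ w : List Nat, w.length ≤ 9 → (∀ l ∈ w, Sig l) → tb singles (imgw 15 w) = false)

theorem leaf_spec {Sig : Nat → Prop} (hB : Bad Sig) {L : List Nat} (hL : ∀ l ∈ L, Sig l)
    (h : leaf L = true) : False := by
  unfold leaf at h
  cases hb : bfs smalls L 3 0 [15] with
  | true =>
    obtain ⟨m, hm, w, h1, h2, h3⟩ := bfs_spec _ _ _ hb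
    simp only [List.mem_singleton] at hm
    subst hm
    have := hB.1 w h1 fun l hl => hL l (h2 l hl)
    simp [this] at h3
  | false =>
    rw [hb] at h
    obtain ⟨m, hm, w, h1, h2, h3⟩ := bfs_spec _ _ _ h
    simp only [List.mem_singleton] at hm
    subst hm
    have := hB.2 w h1 fun l hl => hL l (h2 l hl)
    simp [this] at h3

/-- every pair is merged by some word, and letters map pairs to pairs or singletons -/
def Good (Sig : Nat → Prop) : Prop :=
  (∀ p ∈ pairs, ∃ w : List Nat, (∀ l ∈ w, Sig l) ∧ imgw p w ∈ [1, 2, 4, 8]) ∧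
  (∀ l, Sig l → ∀ p ∈ pairs, img l p ∈ [1, 2, 4, 8] ∨ img l p ∈ pairs)

theorem usefulAux_spec {D l : Nat} : ∀ (ps : List Nat), usefulAux D l ps = false →
    ∀ p ∈ ps, tb D p = false → tb D (img l p) = false
  | [], _, p, hp => by simp at hp
  | q :: ps, h, p, hp => by
    intro hD
    simp only [usefulAux] at h
    cases hq : tb D q with
    | true =>
      rw [hq] at h
      rcases List.mem_cons.1 hp with rfl | hp
      · simp [hD] at hq
      · exact usefulAux_spec ps h p hp hD
    | false =>
      rw [hq] at h
      cases hi : tb D (img l q) with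
      | true => rw [hi] at h; simp at h
      | false =>
        rw [hi] at h
        rcases List.mem_cons.1 hp with rfl | hp
        · exact hi
        · exact usefulAux_spec ps h p hp hD

theorem exists_useful {Sig : Nat → Prop} (hG : Good Sig) {D : Nat} {L : List Nat}
    (h : okD D L = true) : ∃ l, Sig l ∧ l ∉ L ∧ useful D l = true := by
  by_contra hcon
  push Not at hcon
  simp only [okD, Bool.and_eq_true, List.any_eq_true, List.all_eq_true,
    Bool.not_eq_true'] at h
  obtain ⟨⟨⟨⟨⟨h1, h2⟩, h4⟩, h8⟩, p, hp, hpD⟩, hL⟩ := h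
  have hn : ∀ l, Sig l → useful D l = false := by
    intro l hl
    by_cases hlL : l ∈ L
    · exact hL l hlL
    · simpa using hcon l hl hlL
  obtain ⟨w, hw, hwp⟩ := hG.1 p hp
  have hs : ∀ x ∈ [1, 2, 4, 8], tb D x = true := by
    intro x hx
    simp only [List.mem_cons, List.not_mem_nil, or_false] at hx
    rcases hx with rfl | rfl | rfl | rfl <;> assumption
  have key : ∀ (w : List Nat) (p : Nat), p ∈ pairs → tb D p = false → (∀ l ∈ w, Sig l) →
      tb D (imgw p w) = false := by
    intro w
    induction w with
    | nil => intro p _ hD _; exact hD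
    | cons l w ih =>
      intro p hp hD hw
      have hl : Sig l := hw l (by simp)
      have hi := usefulAux_spec _ (hn l hl) p hp hD
      refine ih _ ?_ hi fun l hl => hw l (by simp [hl])
      rcases hG.2 l hl p hp with h | h
      · have := hs _ h
        simp [hi] at this
      · exact h
  have a := key w p hp hpD hw
  rw [hs _ hwp] at a
  simp at a

theorem splitC_spec {D : Nat} {K : List Nat → List Nat → Bool} :
    ∀ (C U N : List Nat), splitC D K U N C = true → (∀ n ∈ N, useful D n = false) →
    ∃ U' N', K U' N' = true ∧ (∀ n ∈ N', useful D n = false) ∧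
      ∀ x, x ∈ U ∨ x ∈ N ∨ x ∈ C → x ∈ U' ∨ x ∈ N'
  | [], U, N, h, hN => ⟨U, N, h, hN, by simp⟩
  | c :: C, U, N, h, hN => by
    simp only [splitC] at h
    cases hc : useful D c with
    | true =>
      rw [hc] at h
      obtain ⟨U', N', h1, h2, h3⟩ := splitC_spec C _ _ h hN
      refine ⟨U', N', h1, h2, fun x hx => h3 x ?_⟩
      simp only [List.mem_cons] at hx ⊢
      tauto
    | false =>
      rw [hc] at h
      obtain ⟨U', N', h1, h2, h3⟩ := splitC_spec C _ _ h (by simpa using ⟨hc, hN⟩)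
      refine ⟨U', N', h1, h2, fun x hx => h3 x ?_⟩
      simp only [List.mem_cons] at hx ⊢
      tauto

theorem proc_spec {Sig : Nat → Prop} {L N : List Nat} {K : Nat → List Nat → Bool}
    (hK : ∀ u C, K u C = true → Sig u → (∀ l, Sig l → l ∈ u :: L ∨ l ∈ C) → False) :
    ∀ (U : List Nat), proc K N U = true → (∀ l, Sig l → l ∈ L ∨ l ∈ U ++ N) →
    ∀ l, Sig l → l ∈ L ∨ l ∈ N
  | [], _, h => h
  | u :: us, h, hS => by
    simp only [proc] at h
    cases hu : K u (us ++ N) with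
    | false => rw [hu] at h; simp at h
    | true =>
      rw [hu] at h
      have hnu : ¬ Sig u := fun hs => hK u _ hu hs (by
        intro l hl
        have := hS l hl
        simp only [List.mem_cons, List.mem_append] at this ⊢
        tauto)
      refine proc_spec hK us h fun l hl => ?_
      have := hS l hl
      have hne : l ≠ u := fun e => hnu (e ▸ hl)
      simp only [List.mem_cons, List.mem_append] at this ⊢
      tauto

theorem search_spec {Sig : Nat → Prop} (hB : Bad Sig) (hG : Good Sig) :
    ∀ (k : Nat) (L C : List Nat), search k L C = true → (∀ l ∈ L, Sig l) →
    (∀ l, Sig l → l ∈ L ∨ l ∈ C) → False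
  | 0, _, _, h, _, _ => by simp [search] at h
  | k + 1, L, C, h, hL, hC => by
    simp only [search] at h
    cases hD : okD (closure L 6 singles) L with
    | false => rw [hD] at h; simp at h
    | true =>
      rw [hD] at h
      obtain ⟨l, hl, hlL, hlu⟩ := exists_useful hG hD
      obtain ⟨U, N, h1, h2, h3⟩ := splitC_spec C [] [] h (by simp)
      have := proc_spec (Sig := Sig) (L := L) (by
        intro u C' hu hs hall
        have hL' : ∀ l ∈ u :: L, Sig l := by simpa using ⟨hs, hL⟩
        cases hf : leaf (u :: L) with
        | true => exact leaf_spec hB hL' hf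
        | false =>
          rw [hf] at hu
          exact search_spec hB hG k _ _ hu hL' hall) U h1 (by
        intro l hl
        rcases hC l hl with h | h
        · exact Or.inl h
        · exact Or.inr (by simpa using h3 l (by simp [h]))) l hl
      rcases this with h | h
      · exact hlL h
      · simp [h2 l h] at hlu

theorem mem_filt {Sig : Nat → Prop} (hB : Bad Sig) {a : Nat} (ha : Sig a) :
    ∀ (C : List Nat) (l : Nat), Sig l → l ∈ C → l ∈ filt a C
  | [], _, _, h => h
  | c :: C, l, hl, h => by
    simp only [filt]
    cases hf : leaf [c, a] with
    | true =>
      have : l ≠ c := by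
        rintro rfl
        exact leaf_spec hB (by simpa using ⟨hl, ha⟩) hf
      simp only [List.mem_cons, this, false_or] at h
      exact mem_filt hB ha C l hl h
    | false =>
      simp only [List.mem_cons, cond_false] at h ⊢
      exact h.imp id (mem_filt hB ha C l hl)

theorem top_spec {Sig : Nat → Prop} (hB : Bad Sig) (hG : Good Sig)
    (hall : ∀ l, Sig l → l ∈ allCodes) :
    ∀ (as : List Nat), top as = true → ∀ a ∈ as, ¬ Sig a
  | [], _, a, h => by simp at h
  | b :: as, h, a, ha => by
    simp only [top] at h
    cases hb : (bif leaf [b] then true else search 4 [b] (filt b allCodes)) with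
    | false => rw [hb] at h; simp at h
    | true =>
      rw [hb] at h
      rcases List.mem_cons.1 ha with rfl | ha
      · intro hs
        cases hf : leaf [a] with
        | true => exact leaf_spec hB (by simpa using hs) hf
        | false =>
          rw [hf] at hb
          exact search_spec hB hG _ _ _ hb (by simpa using hs)
            fun l hl => Or.inr (mem_filt hB hs _ l hl (hall l hl))
      · exact top_spec hB hG hall as h a ha

/-- mask of a subset of `Fin 4` -/
def mask (S : Finset (Fin 4)) : Nat :=
  Nat.lor (Nat.lor (bif decide (0 ∈ S) then 1 else 0) (bif decide (1 ∈ S) then 2 else 0))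
    (Nat.lor (bif decide (2 ∈ S) then 4 else 0) (bif decide (3 ∈ S) then 8 else 0))

def codeF (f : Fin 4 → Fin 4) : Nat := code (f 0) (f 1) (f 2) (f 3)

/-- purely numerical version of the statement that `code` represents the image -/
theorem tab_code : ∀ a b c d : Fin 4, ∀ m : Fin 16,
    img (code a b c d) m = tab a b c d m := by decide +kernel

theorem code_mem_all : ∀ a b c d : Fin 4, code a b c d ∈ allCodes := by decide +kernel

theorem code_mem_start : ∀ a c d : Fin 4, a ≠ 1 → c ≠ 1 → d ≠ 1 →
    code a a c d ∈ startCodes := by decide +kernel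

theorem code_pairs : ∀ a b c d : Fin 4, ∀ p ∈ pairs,
    img (code a b c d) p ∈ [1, 2, 4, 8] ∨ img (code a b c d) p ∈ pairs := by decide +kernel

theorem mask_lt : ∀ S, mask S < 16 := by decide +kernel

theorem mask_image (f : Fin 4 → Fin 4) (S : Finset (Fin 4)) :
    mask (S.image f) = img (codeF f) (mask S) := by
  rw [codeF, tab_code (f 0) (f 1) (f 2) (f 3) ⟨mask S, mask_lt S⟩]
  have hi : ∀ x, x ∈ S.image f ↔ (0 ∈ S ∧ f 0 = x) ∨ (1 ∈ S ∧ f 1 = x) ∨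
      (2 ∈ S ∧ f 2 = x) ∨ (3 ∈ S ∧ f 3 = x) := by
    intro x
    simp [Finset.mem_image, Fin.exists_fin_succ]
    
  simp only [mask, hi]
  generalize f 0 = a
  generalize f 1 = b
  generalize f 2 = c
  generalize f 3 = d
  have key : ∀ (p q r s : Bool) (a b c d : Fin 4), 
    (Nat.lor (Nat.lor (bif decide ((p = true ∧ a = 0) ∨ (q = true ∧ b = 0) ∨ (r = true ∧ c = 0) ∨ (s = true ∧ d = 0)) then 1 else 0)
      (bif decide ((p = true ∧ a = 1) ∨ (q = true ∧ b = 1) ∨ (r = true ∧ c = 1) ∨ (s = true ∧ d = 1)) then 2 else 0))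
     (Nat.lor (bif decide ((p = true ∧ a = 2) ∨ (q = true ∧ b = 2) ∨ (r = true ∧ c = 2) ∨ (s = true ∧ d = 2)) then 4 else 0)
      (bif decide ((p = true ∧ a = 3) ∨ (q = true ∧ b = 3) ∨ (r = true ∧ c = 3) ∨ (s = true ∧ d = 3)) then 8 else 0)))
     = tab a b c d (Nat.lor (Nat.lor (bif p then 1 else 0) (bif q then 2 else 0))
    (Nat.lor (bif r then 4 else 0) (bif s then 8 else 0))) := by decide +kernel
  have := key (decide (0 ∈ S)) (decide (1 ∈ S)) (decide (2 ∈ S)) (decide (3 ∈ S)) a b c d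
  simpa only [decide_eq_true_eq] using this

theorem mask_single : ∀ S : Finset (Fin 4), S.card = 1 → mask S ∈ [1, 2, 4, 8] := by
  decide +kernel

theorem card_single : ∀ S : Finset (Fin 4), tb singles (mask S) = true → S.card = 1 := by
  decide +kernel

theorem card_small : ∀ S : Finset (Fin 4), tb smalls (mask S) = true →
    1 ≤ S.card ∧ S.card ≤ 2 := by
  decide +kernel

theorem pair_exists : ∀ p ∈ pairs, ∃ S : Finset (Fin 4), mask S = p ∧ S.card = 2 := by
  decide +kernel

end Cerny
namespace Cerny

section words
variable {Q A : Type*} [DecidableEq Q] (act : A → Q → Q)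

theorem wordImage_append (R : Finset Q) (u v : List A) :
    wordImage act R (u ++ v) = wordImage act (wordImage act R u) v := by
  induction u generalizing R with
  | nil => rfl
  | cons s u ih => exact ih _

theorem wordImage_mono {R S : Finset Q} (h : R ⊆ S) (w : List A) :
    wordImage act R w ⊆ wordImage act S w := by
  induction w generalizing R S with
  | nil => exact h
  | cons s u ih => exact ih (Finset.image_subset_image h)

theorem wordImage_nonempty {R : Finset Q} (h : R.Nonempty) (w : List A) :
    (wordImage act R w).Nonempty := by
  induction w generalizing R with
  | nil => exact h
  | cons s u ih => exact ih (h.image _)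

/-- `R` is merged by a word of length at most `k` -/
def P (k : ℕ) (R : Finset Q) : Prop :=
  ∃ w : List A, w.length ≤ k ∧ (wordImage act R w).card = 1

variable {act}

theorem P.mono {k l : ℕ} (h : k ≤ l) {R : Finset Q} : P act k R → P act l R
  | ⟨w, h1, h2⟩ => ⟨w, h1.trans h, h2⟩

theorem P.cons {k : ℕ} {R : Finset Q} (s : A) : P act k (R.image (act s)) → P act (k + 1) R
  | ⟨w, h1, h2⟩ => ⟨s :: w, by simpa using h1, h2⟩

theorem P.of_sync [Fintype Q] {R : Finset Q} (hR : R.Nonempty)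
    (h : ∃ w : List A, (wordImage act Finset.univ w).card = 1) : ∃ m, P act m R := by
  obtain ⟨w, hw⟩ := h
  refine ⟨w.length, w, le_rfl, le_antisymm ?_ (wordImage_nonempty act hR w).card_pos⟩
  exact hw ▸ Finset.card_le_card (wordImage_mono act (Finset.subset_univ _) w)

theorem pair_bound [Fintype Q] (h : ∃ w : List A, (wordImage act Finset.univ w).card = 1)
    (R : Finset Q) (hR1 : 1 ≤ R.card) (hR : R.card ≤ 2) :
    P act ((Fintype.card Q).choose 2) R := by
  classical
  by_cases hR2 : R.card = 1
  · exact ⟨[], by simp, hR2⟩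
  replace hR : R.card = 2 := by omega
  set N := (Fintype.card Q).choose 2 with hN
  let D : ℕ → Finset (Finset Q) := fun k => (Finset.powersetCard 2 Finset.univ).filter (P act k)
  have memD : ∀ k (S : Finset Q), S ∈ D k ↔ S.card = 2 ∧ P act k S := by
    intro k S; simp [D, Finset.mem_powersetCard]
  have hcard : (Finset.powersetCard 2 (Finset.univ : Finset Q)).card = N := by
    rw [Finset.card_powersetCard, Finset.card_univ]
  by_cases hst : ∃ k < N, D k = D (k + 1)
  · obtain ⟨k, hk, hD⟩ := hst
    have key : ∀ m (S : Finset Q), S.card = 2 → P act m S → P act k S := by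
      have back : ∀ S : Finset Q, S.card = 2 → P act (k + 1) S → P act k S := by
        intro S hS hP
        have : S ∈ D k := by rw [hD, memD]; exact ⟨hS, hP⟩
        exact ((memD _ _).1 this).2
      intro m
      induction m with
      | zero => intro S hS hP; exact hP.mono (Nat.zero_le _)
      | succ m ih =>
        rintro S hS ⟨w, hw1, hw2⟩
        cases w with
        | nil => simp [wordImage, hS] at hw2
        | cons s w =>
          apply back S hS
          apply P.cons s
          have h1 : 1 ≤ (S.image (act s)).card :=
            ((Finset.card_pos.1 (by omega : 0 < S.card)).image _).card_pos
          have h2 : (S.image (act s)).card ≤ 2 := hS ▸ Finset.card_image_le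
          by_cases h3 : (S.image (act s)).card = 1
          · exact ⟨[], by simp, h3⟩
          · exact ih _ (by omega) ⟨w, by simpa using hw1, hw2⟩
    obtain ⟨m, hm⟩ := P.of_sync (Finset.card_pos.1 (by omega : 0 < R.card)) h
    exact (key m R hR hm).mono hk.le
  · push Not at hst
    have hge : ∀ k ≤ N, k ≤ (D k).card := by
      intro k
      induction k with
      | zero => simp
      | succ k ih =>
        intro hk
        have h1 := ih (by omega)
        have h2 : D k ⊂ D (k + 1) := by
          refine Finset.ssubset_iff_subset_ne.2 ⟨fun S hS => ?_, hst k (by omega)⟩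
          rw [memD] at hS ⊢
          exact ⟨hS.1, hS.2.mono (by omega)⟩
        have := Finset.card_lt_card h2
        omega
    have : D N = Finset.powersetCard 2 Finset.univ :=
      Finset.eq_of_subset_of_card_le (Finset.filter_subset _ _) (hcard ▸ hge N le_rfl)
    have hRN : R ∈ D N := by rw [this]; simp [Finset.mem_powersetCard, hR]
    exact ((memD _ _).1 hRN).2

/-- if a word reaches a set of size at most two, we can continue with `choose` letters -/
theorem finish [Fintype Q] (h : ∃ w : List A, (wordImage act Finset.univ w).card = 1)
    (hQ : 1 ≤ Fintype.card Q) (u : List A) (hu : (wordImage act Finset.univ u).card ≤ 2) :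
    P act (u.length + (Fintype.card Q).choose 2) Finset.univ := by
  have hne : (Finset.univ : Finset Q).Nonempty := Finset.card_pos.1 (by rw [Finset.card_univ]; omega)
  obtain ⟨w, h1, h2⟩ := pair_bound h _ (wordImage_nonempty act hne u).card_pos hu
  exact ⟨u ++ w, by simpa using h1, by rw [wordImage_append]; exact h2⟩

theorem exists_noninj [Fintype Q] (h : ∃ w : List A, (wordImage act Finset.univ w).card = 1)
    (hQ : 2 ≤ Fintype.card Q) : ∃ s, ¬ Function.Injective (act s) := by
  by_contra hc
  push Not at hc
  obtain ⟨w, hw⟩ := h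
  have : ∀ (w : List A) (R : Finset Q), (wordImage act R w).card = R.card := by
    intro w
    induction w with
    | nil => intro R; rfl
    | cons s w ih => intro R; exact (ih _).trans (Finset.card_image_of_injective _ (hc s))
  rw [this, Finset.card_univ] at hw
  omega

theorem four [Fintype Q] (h : ∃ w : List A, (wordImage act Finset.univ w).card = 1)
    (hQ : Fintype.card Q = 4) : P act 9 (Finset.univ : Finset Q) := by
  by_contra hno
  have hchoose : (Fintype.card Q).choose 2 = 6 := by rw [hQ]; rfl
  have hsmall : ∀ u : List A, u.length ≤ 3 → ¬ (wordImage act Finset.univ u).card ≤ 2 := by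
    intro u hu hc
    exact hno ((finish h (by omega) u hc).mono (by omega))
  obtain ⟨s, hs⟩ := exists_noninj h (by omega)
  have hxy : ∃ x y, x ≠ y ∧ act s x = act s y ∧ ∀ q, act s q ≠ y := by
    simp only [Function.Injective, not_forall] at hs
    obtain ⟨x, y, hxy, hne⟩ := hs
    by_cases hy : ∀ q, act s q ≠ y
    · exact ⟨x, y, hne, hxy, hy⟩
    by_cases hx : ∀ q, act s q ≠ x
    · exact ⟨y, x, Ne.symm hne, hxy.symm, hx⟩
    exfalso
    push Not at hx hy
    have hlt : ∀ T : Finset Q, x ∈ T → y ∈ T → (T.image (act s)).card < T.card := by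
      intro T hxT hyT
      refine lt_of_le_of_ne Finset.card_image_le fun he => hne ?_
      exact Finset.card_image_iff.1 he hxT hyT hxy
    have h1 := hlt Finset.univ (by simp) (by simp)
    have h2 := hlt (Finset.univ.image (act s)) (by simpa using hx) (by simpa using hy)
    rw [Finset.card_univ, hQ] at h1
    refine hsmall [s, s] (by simp) ?_
    simp only [wordImage]
    omega
  obtain ⟨x, y, hne, hsxy, hsy⟩ := hxy
  obtain ⟨e, hex, hey⟩ : ∃ e : Q ≃ Fin 4, e x = 0 ∧ e y = 1 := by
    let e0 : Q ≃ Fin 4 := Fintype.equivFinOfCardEq hQ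
    let e1 : Q ≃ Fin 4 := e0.trans (Equiv.swap (e0 x) 0)
    have h1 : e1 x = 0 := by simp [e1]
    have h2 : e1 y ≠ 0 := fun h => hne (e1.injective (h1.trans h.symm))
    refine ⟨e1.trans (Equiv.swap (e1 y) 1), ?_, by simp⟩
    simp only [Equiv.trans_apply, h1]
    exact Equiv.swap_apply_of_ne_of_ne (Ne.symm h2) (by decide)
  let F : A → Fin 4 → Fin 4 := fun s q => e (act s (e.symm q))
  let M : Finset Q → Nat := fun S => mask (S.image e)
  have hM : ∀ s S, M (S.image (act s)) = img (codeF (F s)) (M S) := by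
    intro s S
    simp only [M, ← mask_image, Finset.image_image]
    congr 2
    funext q
    simp [F]
  have hMw : ∀ (w : List A) S, M (wordImage act S w) = imgw (M S) (w.map fun s => codeF (F s)) := by
    intro w
    induction w with
    | nil => intro S; rfl
    | cons s w ih => intro S; simp only [wordImage, List.map_cons, imgw, ih, hM]
  have hcardM : ∀ S : Finset Q, (S.image e).card = S.card :=
    fun S => Finset.card_image_of_injective _ e.injective
  have hM15 : M Finset.univ = 15 := by
    simp only [M, Finset.image_univ_equiv]
    decide
  let Sig : Nat → Prop := fun c => ∃ s, codeF (F s) = c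
  have lift : ∀ w : List Nat, (∀ l ∈ w, Sig l) → ∃ u : List A, u.map (fun s => codeF (F s)) = w := by
    intro w
    induction w with
    | nil => intro _; exact ⟨[], rfl⟩
    | cons l w ih =>
      intro hw
      obtain ⟨u, hu⟩ := ih fun l hl => hw l (by simp [hl])
      obtain ⟨s, hs⟩ := hw l (by simp)
      exact ⟨s :: u, by simp [hu, hs]⟩
  have hB : Bad Sig := by
    constructor
    · intro w hw hS
      obtain ⟨u, rfl⟩ := lift w hS
      rw [← hM15, ← hMw, ← Bool.not_eq_true]
      intro ht
      have := (card_small _ ht).2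
      rw [hcardM] at this
      exact hsmall u (by simpa using hw) this
    · intro w hw hS
      obtain ⟨u, rfl⟩ := lift w hS
      rw [← hM15, ← hMw, ← Bool.not_eq_true]
      intro ht
      have := card_single _ ht
      rw [hcardM] at this
      exact hno ⟨u, by simpa using hw, this⟩
  have hG : Good Sig := by
    constructor
    · intro p hp
      obtain ⟨S, rfl, hS⟩ := pair_exists p hp
      have hS' : (S.image e.symm).image e = S := by
        rw [Finset.image_image]; simp
      have hne : (S.image e.symm).Nonempty := (Finset.card_pos.1 (by omega : 0 < S.card)).image _
      obtain ⟨m, w, -, hw⟩ := P.of_sync hne h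
      refine ⟨w.map fun s => codeF (F s), ?_, ?_⟩
      · intro l hl
        obtain ⟨s, -, hs⟩ := List.mem_map.1 hl
        exact ⟨s, hs⟩
      · have := hMw w (S.image e.symm)
        simp only [M, hS'] at this
        rw [← this]
        exact mask_single _ (by rw [hcardM, hw])
    · rintro _ ⟨s, rfl⟩ p hp
      exact code_pairs _ _ _ _ p hp
  have hall : ∀ l, Sig l → l ∈ allCodes := by
    rintro _ ⟨s, rfl⟩
    exact code_mem_all _ _ _ _
  refine top_spec hB hG hall _ top_true (codeF (F s)) ?_ ⟨s, rfl⟩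
  have hx' : e.symm 0 = x := by rw [← hex]; simp
  have hy' : e.symm 1 = y := by rw [← hey]; simp
  have h01 : F s 1 = F s 0 := by simp only [F, hx', hy', hsxy]
  have hn1 : ∀ q, F s q ≠ 1 := fun q hq => hsy (e.symm q) (e.injective (hq.trans hey.symm))
  unfold codeF
  rw [h01]
  exact code_mem_start _ _ _ (hn1 _) (hn1 _) (hn1 _)

end words

end Cerny

theorem stmt_1 {Q A : Type*} [Fintype Q] [DecidableEq Q] (act : A → Q → Q)
    (hn : Fintype.card Q ≤ 4)
    (h : ∃ w : List A, (wordImage act Finset.univ w).card = 1) :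
    ∃ w : List A, w.length ≤ (Fintype.card Q - 1) ^ 2 ∧
      (wordImage act Finset.univ w).card = 1 := by
  change Cerny.P act _ _
  have h4 : Fintype.card Q = 0 ∨ Fintype.card Q = 1 ∨ Fintype.card Q = 2 ∨ Fintype.card Q = 3 ∨
      Fintype.card Q = 4 := by omega
  rcases h4 with h0 | h0 | h0 | h0 | h0
  · obtain ⟨w, hw⟩ := h
    obtain ⟨q, -⟩ := Finset.card_pos.1 (by omega : 0 < (wordImage act Finset.univ w).card)
    exact absurd (Fintype.card_pos_iff.2 ⟨q⟩) (by omega)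
  · exact ⟨[], by simp, by simpa [wordImage] using h0⟩
  · exact (Cerny.finish h (by omega) [] (by simp [wordImage, h0])).mono (by simp [h0])
  · obtain ⟨s, hs⟩ := Cerny.exists_noninj h (by omega)
    refine (Cerny.finish h (by omega) [s] ?_).mono (by rw [h0]; simp [Nat.choose])
    have : (Finset.univ.image (act s)).card < 3 := by
      rw [← h0, ← Finset.card_univ]
      refine lt_of_le_of_ne Finset.card_image_le fun he => hs ?_
      have := Finset.card_image_iff.1 he
      simpa using this
    simp only [wordImage]
    omega
  · exact (Cerny.four h h0).mono (by rw [h0]; norm_num)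
end

section
/- Let (Q, Σ) be a DFA with n = |Q| satisfying hypothesis (H). Then there exist distinct states p₁, p₂ ∈ Q and letters b, a ∈ Σ such that Qb = Q∖{p₁}, p₁b = p₂b, Qa = Q, p₁a = p₂, and Q(ba) = Q∖{p₂}. -/
theorem aux_compl {Q : Type*} [Fintype Q] [DecidableEq Q] (S : Finset Q)
    (h1 : Fintype.card Q - 2 < S.card) (h2 : S ≠ Finset.univ) :
    ∃ p, S = Finset.univ \ {p} := by
  have hne : ∃ p, p ∉ S := by
    by_contra hh
    push Not at hh
    exact h2 (Finset.eq_univ_iff_forall.2 hh)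
  obtain ⟨p, hp⟩ := hne
  refine ⟨p, Finset.eq_of_subset_of_card_le ?_ ?_⟩
  · intro x hx
    simp only [Finset.mem_sdiff, Finset.mem_univ, Finset.mem_singleton, true_and]
    rintro rfl
    exact hp hx
  · rw [Finset.card_sdiff_of_subset (Finset.subset_univ _), Finset.card_univ,
      Finset.card_singleton]
    omega

theorem aux_sub {Q : Type*} [Fintype Q] [DecidableEq Q] (S : Finset Q) (q : Q)
    (h1 : Fintype.card Q - 2 < S.card) (h2 : q ∉ S) : S = Finset.univ \ {q} := by
  obtain ⟨p, rfl⟩ := aux_compl S h1 (by rintro rfl; simp at h2)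
  simp at h2
  rw [h2]

theorem aux_bij {Q : Type*} [Fintype Q] [DecidableEq Q] (f : Q → Q) (p : Q)
    (h : Finset.univ.image f = Finset.univ) :
    (Finset.univ \ {p}).image f = Finset.univ \ {f p} := by
  have hs : Function.Surjective f := by
    intro y
    have : y ∈ Finset.univ.image f := by rw [h]; simp
    simpa using this
  have hi : Function.Injective f := Finite.injective_iff_surjective.2 hs
  rw [Finset.image_sdiff _ _ hi, h, Finset.image_singleton]

/-- If `f` misses exactly `p`, and removing either `p` or `r` from the domain keeps the
image, then `f p = f r`. -/
theorem aux_merge {Q : Type*} [Fintype Q] [DecidableEq Q] (f : Q → Q) (p r : Q) (hpr : p ≠ r)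
    (h : Finset.univ.image f = Finset.univ \ {p})
    (h1 : (Finset.univ \ {p}).image f = Finset.univ \ {p})
    (h2 : (Finset.univ \ {r}).image f = Finset.univ \ {p}) : f p = f r := by
  by_contra hne
  have hm : ∀ x, f x ∈ Finset.univ \ {p} := by
    intro x
    rw [← h]
    simp
  have e1 := hm p
  rw [← h1] at e1
  have e2 := hm r
  rw [← h2] at e2
  simp only [Finset.mem_image, Finset.mem_sdiff, Finset.mem_univ, Finset.mem_singleton,
    true_and] at e1 e2
  obtain ⟨y, hy, hy'⟩ := e1
  obtain ⟨z, hz, hz'⟩ := e2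
  have hyr : y ≠ r := by rintro rfl; exact hne hy'.symm
  have hzp : z ≠ p := by rintro rfl; exact hne hz'
  have hsub : Finset.univ \ {p} ⊆ (Finset.univ \ {p, r}).image f := by
    intro v hv
    rw [← h] at hv
    simp only [Finset.mem_image, Finset.mem_univ, true_and] at hv
    obtain ⟨u, rfl⟩ := hv
    simp only [Finset.mem_image, Finset.mem_sdiff, Finset.mem_univ, Finset.mem_insert,
      Finset.mem_singleton, true_and, not_or]
    by_cases hu : u = p
    · exact ⟨y, ⟨hy, hyr⟩, by rw [hy', hu]⟩
    · by_cases hu2 : u = r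
      · exact ⟨z, ⟨hzp, hz⟩, by rw [hz', hu2]⟩
      · exact ⟨u, ⟨hu, hu2⟩, rfl⟩
  have c1 := (Finset.card_le_card hsub).trans Finset.card_image_le
  rw [Finset.card_sdiff_of_subset (Finset.subset_univ _),
    Finset.card_sdiff_of_subset (Finset.subset_univ _), Finset.card_univ,
      Finset.card_singleton, Finset.card_pair hpr] at c1
  have c2 : ({p, r} : Finset Q).card ≤ Fintype.card Q := Finset.card_le_univ _
  rw [Finset.card_pair hpr] at c2
  omega

theorem stmt_5 {Q A : Type*} [Fintype Q] [DecidableEq Q] (act : A → Q → Q)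
    (hH1 : ∃ w : List A, (wordImage act Finset.univ w).card ≤ Fintype.card Q - 2)
    (hH2 : ∀ w : List A, w.length ≤ 3 →
      Fintype.card Q - 2 < (wordImage act Finset.univ w).card) :
    ∃ p₁ p₂ : Q, p₁ ≠ p₂ ∧ ∃ b a : A,
      Finset.univ.image (act b) = Finset.univ \ {p₁} ∧
      act b p₁ = act b p₂ ∧
      Finset.univ.image (act a) = Finset.univ ∧
      act a p₁ = p₂ ∧
      wordImage act Finset.univ [b, a] = Finset.univ \ {p₂} := by

  classical
  by_contra hcon
  have miss : ∀ (b : A) (p : Q), Finset.univ.image (act b) = Finset.univ \ {p} →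
      ∀ R : Finset Q, p ∉ R.image (act b) := by
    intro b p hb R hp
    have := Finset.image_subset_image (f := act b) (Finset.subset_univ R) hp
    rw [hb] at this
    simp at this
  have key : ∀ (w : List A) (R : Finset Q),
      (R = Finset.univ ∨ ∃ b p, Finset.univ.image (act b) = Finset.univ \ {p} ∧
        R = Finset.univ \ {p}) →
      Fintype.card Q - 2 < (wordImage act R w).card := by
    intro w
    induction w with
    | nil =>
      rintro R (rfl | ⟨b, p, hb, rfl⟩)
      · exact hH2 [] (by simp)
      · rw [← hb]
        exact hH2 [b] (by simp)
    | cons s w ih =>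
      intro R hR
      refine ih _ ?_
      have hs := hH2 [s] (by simp)
      simp only [wordImage] at hs
      rcases hR with rfl | ⟨b, p, hb, rfl⟩
      · by_cases hu : Finset.univ.image (act s) = Finset.univ
        · exact Or.inl hu
        · obtain ⟨q, hq⟩ := aux_compl _ hs hu
          exact Or.inr ⟨s, q, hq, hq⟩
      · right
        by_cases hu : Finset.univ.image (act s) = Finset.univ
        · refine ⟨b, p, hb, ?_⟩
          have him := aux_bij (act s) p hu
          by_cases hp : act s p = p
          · rw [him, hp]
          · exfalso
            apply hcon
            have hbb := hH2 [b, b] (by simp)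
            have hbsb := hH2 [b, s, b] (by simp)
            simp only [wordImage] at hbb hbsb
            rw [hb] at hbb hbsb
            rw [him] at hbsb
            refine ⟨p, act s p, Ne.symm hp, b, s, hb, ?_, hu, rfl, ?_⟩
            · exact aux_merge (act b) p (act s p) (Ne.symm hp) hb
                (aux_sub _ p hbb (miss b p hb _)) (aux_sub _ p hbsb (miss b p hb _))
            · simp only [wordImage]
              rw [hb, him]
        · obtain ⟨q, hq⟩ := aux_compl _ hs hu
          refine ⟨s, q, hq, ?_⟩
          have hbs := hH2 [b, s] (by simp)
          simp only [wordImage] at hbs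
          rw [hb] at hbs
          exact aux_sub _ q hbs (miss s q hq _)
  obtain ⟨w, hw⟩ := hH1
  have := key w Finset.univ (Or.inl rfl)
  omega
end

section
/- Let (Q, Σ) be a DFA with n = |Q| satisfying hypothesis (H). Then there exist distinct states p₁, p₂ ∈ Q, letters b, a, d ∈ Σ, and a state q ∈ Q∖{p₁, p₂} such that: Qb = Q∖{p₁}, p₁b = p₂b, Qa = Q, p₁a = p₂, Q(ba) = Q∖{p₂}, qb ≠ p₁, Q(bad) = Q∖{q}, Q(badb) = Q∖{p₁, qb}, and, writing X = {p₁, p₁a, p₁a², …} for the orbit of p₁ under a, one of the following holds: (1) |X| ≥ 3 and d = a; (2) |X| = 2, Qd = Q, p₁d = p₁, and there exists a state p₃ ∈ Q∖{p₁, p₂} with p₃d = p₂. -/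
theorem wi_nonempty {Q A : Type*} [DecidableEq Q] (act : A → Q → Q) (w : List A) :
    ∀ R : Finset Q, R.Nonempty → (wordImage act R w).Nonempty := by
  induction w with
  | nil => intro R h; simpa [wordImage] using h
  | cons s w ih => intro R h; exact ih _ (h.image _)

theorem image_compl_inj {Q : Type*} [Fintype Q] [DecidableEq Q] (f : Q → Q)
    (hf : Function.Bijective f) (x : Q) :
    (Finset.univ \ {x}).image f = Finset.univ \ {f x} := by
  rw [Finset.image_sdiff _ _ hf.1, Finset.image_univ_of_surjective hf.2, Finset.image_singleton]

theorem wi_invariant {Q A : Type*} [Fintype Q] [DecidableEq Q] (act : A → Q → Q) (S : Set Q)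
    (h1 : ∀ c p, Finset.univ.image (act c) = Finset.univ \ {p} → p ∈ S)
    (h2 : ∀ a, Function.Bijective (act a) → ∀ x ∈ S, act a x ∈ S)
    (h3 : ∀ c p x, Finset.univ.image (act c) = Finset.univ \ {p} → x ∈ S →
      (Finset.univ \ {x}).image (act c) = Finset.univ \ {p})
    (h4 : ∀ c, Function.Bijective (act c) ∨
      ∃ p, Finset.univ.image (act c) = Finset.univ \ {p}) (w : List A) :
    ∀ R : Finset Q, (R = Finset.univ ∨ ∃ x ∈ S, R = Finset.univ \ {x}) →
      (wordImage act R w = Finset.univ ∨ ∃ x ∈ S, wordImage act R w = Finset.univ \ {x}) := by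
  induction w with
  | nil => intro R h; simpa [wordImage] using h
  | cons s w ih =>
    intro R h
    apply ih
    rcases h4 s with hs | ⟨p, hp⟩
    · rcases h with rfl | ⟨x, hx, rfl⟩
      · left; exact Finset.image_univ_of_surjective hs.2
      · right; exact ⟨_, h2 s hs x hx, image_compl_inj _ hs x⟩
    · right
      refine ⟨p, h1 s p hp, ?_⟩
      rcases h with rfl | ⟨x, hx, rfl⟩
      · exact hp
      · exact h3 s p x hp hx

theorem stmt_7 {Q A : Type*} [Fintype Q] [DecidableEq Q] (act : A → Q → Q)
    (hH1 : ∃ w : List A, (wordImage act Finset.univ w).card ≤ Fintype.card Q - 2)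
    (hH2 : ∀ w : List A, w.length ≤ 3 →
      Fintype.card Q - 2 < (wordImage act Finset.univ w).card) :
    ∃ p₁ p₂ : Q, p₁ ≠ p₂ ∧ ∃ b a d : A, ∃ q : Q, q ≠ p₁ ∧ q ≠ p₂ ∧
      Finset.univ.image (act b) = Finset.univ \ {p₁} ∧
      act b p₁ = act b p₂ ∧
      Finset.univ.image (act a) = Finset.univ ∧
      act a p₁ = p₂ ∧
      wordImage act Finset.univ [b, a] = Finset.univ \ {p₂} ∧
      act b q ≠ p₁ ∧
      wordImage act Finset.univ [b, a, d] = Finset.univ \ {q} ∧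
      wordImage act Finset.univ [b, a, d, b] = Finset.univ \ {p₁, act b q} ∧
      ((3 ≤ Set.ncard {x : Q | ∃ k : ℕ, (act a)^[k] p₁ = x} ∧ d = a) ∨
        (Set.ncard {x : Q | ∃ k : ℕ, (act a)^[k] p₁ = x} = 2 ∧
          Finset.univ.image (act d) = Finset.univ ∧ act d p₁ = p₁ ∧
          ∃ p₃ : Q, p₃ ≠ p₁ ∧ p₃ ≠ p₂ ∧ act d p₃ = p₂)) := by
  have hcard : ∀ x : Q, (Finset.univ \ {x} : Finset Q).card = Fintype.card Q - 1 := by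
    intro x
    rw [Finset.card_sdiff_of_subset (Finset.subset_univ _)]; simp
  obtain ⟨w₀, hw₀⟩ := hH1
  have hn : 3 ≤ Fintype.card Q := by
    have h0 := hH2 [] (by simp)
    simp only [wordImage, Finset.card_univ] at h0
    have : Nonempty Q := Fintype.card_pos_iff.1 (by omega)
    have := (wi_nonempty act w₀ Finset.univ Finset.univ_nonempty).card_pos
    omega
  have h4 : ∀ c, Function.Bijective (act c) ∨
      ∃ p, Finset.univ.image (act c) = Finset.univ \ {p} := by
    intro c
    have h := hH2 [c] (by simp)
    simp only [wordImage] at h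
    by_cases hc : Function.Injective (act c)
    · left; exact Finite.injective_iff_bijective.1 hc
    · right
      have hlt : (Finset.univ.image (act c)).card ≠ Fintype.card Q := by
        intro he
        apply hc
        have := Finset.card_image_iff.1 (he.trans Finset.card_univ.symm)
        simpa using this
      have hle : (Finset.univ.image (act c)).card ≤ Fintype.card Q := Finset.card_le_univ _
      have hc1 : (Finset.univ.image (act c))ᶜ.card = 1 := by
        rw [Finset.card_compl]; omega
      obtain ⟨p, hp⟩ := Finset.card_eq_one.1 hc1
      refine ⟨p, ?_⟩
      rw [← hp, ← Finset.compl_eq_univ_sdiff, compl_compl]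
  -- a large image of a co-singleton is everything possible
  have hbig : ∀ c p x, Finset.univ.image (act c) = Finset.univ \ {p} →
      Fintype.card Q - 2 < ((Finset.univ \ {x}).image (act c)).card →
      (Finset.univ \ {x}).image (act c) = Finset.univ \ {p} := by
    intro c p x hc h
    apply Finset.eq_of_subset_of_card_le
    · rw [← hc]; exact Finset.image_subset_image (Finset.subset_univ _)
    · rw [hcard]; omega
  have hw2 : ∀ b p c p', Finset.univ.image (act b) = Finset.univ \ {p} →
      Finset.univ.image (act c) = Finset.univ \ {p'} →
      (Finset.univ \ {p}).image (act c) = Finset.univ \ {p'} := by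
    intro b p c p' hb hc
    apply hbig _ _ _ hc
    have := hH2 [b, c] (by simp)
    simpa only [wordImage, hb] using this
  have hw3 : ∀ b p a c p', Finset.univ.image (act b) = Finset.univ \ {p} →
      Function.Bijective (act a) →
      Finset.univ.image (act c) = Finset.univ \ {p'} →
      (Finset.univ \ {act a p}).image (act c) = Finset.univ \ {p'} := by
    intro b p a c p' hb ha hc
    apply hbig _ _ _ hc
    have := hH2 [b, a, c] (by simp)
    simpa only [wordImage, hb, image_compl_inj _ ha] using this
  have hcol : ∀ c p x, (Finset.univ \ {x}).image (act c) = Finset.univ \ {p} →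
      ∀ r s, r ≠ s → act c r = act c s → x = r ∨ x = s := by
    intro c p x h r s hrs he
    by_contra! hx
    have hi : ((Finset.univ \ {x}).image (act c)).card = (Finset.univ \ {x} : Finset Q).card := by
      rw [h, hcard, hcard]
    have := Finset.card_image_iff.1 hi
    exact hrs (this (by simpa using hx.1.symm) (by simpa using hx.2.symm) he)
  have hno : ∀ S : Set Q,
      (∀ c p, Finset.univ.image (act c) = Finset.univ \ {p} → p ∈ S) →
      (∀ a, Function.Bijective (act a) → ∀ x ∈ S, act a x ∈ S) →
      (∀ c p x, Finset.univ.image (act c) = Finset.univ \ {p} → x ∈ S →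
        (Finset.univ \ {x}).image (act c) = Finset.univ \ {p}) → False := by
    intro S h1 h2 h3
    rcases wi_invariant act S h1 h2 h3 h4 w₀ Finset.univ (Or.inl rfl) with h | ⟨x, -, h⟩
    · rw [h, Finset.card_univ] at hw₀; omega
    · rw [h, hcard] at hw₀; omega
  have hstart : ∃ b p a, Finset.univ.image (act b) = Finset.univ \ {p} ∧
      Function.Bijective (act a) ∧ act a p ≠ p := by
    by_contra! hcon
    apply hno {p | ∃ c, Finset.univ.image (act c) = Finset.univ \ {p}}
    · intro c p h; exact ⟨c, h⟩
    · rintro a ha x ⟨c, hc⟩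
      rw [hcon c x a hc ha]; exact ⟨c, hc⟩
    · rintro c p x hc ⟨b, hb⟩
      exact hw2 b x c p hb hc
  obtain ⟨b, p₁, a, hb, ha, hap⟩ := hstart
  have hpair : ∀ c p', Finset.univ.image (act c) = Finset.univ \ {p'} →
      ∀ r s, r ≠ s → act c r = act c s → p₁ = r ∨ p₁ = s := fun c p' hc =>
    hcol c p' p₁ (hw2 b p₁ c p' hb hc)
  have hbni : ¬ Function.Injective (act b) := by
    intro hi
    have := Finset.image_univ_of_surjective (Finite.injective_iff_surjective.1 hi)
    rw [hb] at this
    have h2 : p₁ ∈ (Finset.univ \ {p₁} : Finset Q) := by rw [this]; simp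
    simp at h2
  have hbcol : ∃ r s, r ≠ s ∧ act b r = act b s := by
    simp only [Function.Injective] at hbni
    push Not at hbni
    obtain ⟨r, s, h, h'⟩ := hbni
    exact ⟨r, s, h', h⟩
  obtain ⟨r, s, hrs, hers⟩ := hbcol
  have hk1 := hcol b p₁ p₁ (hw2 b p₁ b p₁ hb hb) r s hrs hers
  have hk2 := hcol b p₁ _ (hw3 b p₁ a b p₁ hb ha hb) r s hrs hers
  have hbe : act b p₁ = act b (act a p₁) := by
    rcases hk1 with h | h <;> rcases hk2 with h' | h'
    · exact absurd (h'.trans h.symm) hap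
    · rw [h', h, hers]
    · rw [h', h, hers]
    · exact absurd (h'.trans h.symm) hap
  obtain ⟨p₂, hp₂⟩ : ∃ p₂, p₂ = act a p₁ := ⟨_, rfl⟩
  rw [← hp₂] at hbe hap
  have hne : p₁ ≠ p₂ := hap.symm
  have hperm : ∀ a', Function.Bijective (act a') → act a' p₁ = p₁ ∨ act a' p₁ = p₂ :=
    fun a' ha' => hcol b p₁ _ (hw3 b p₁ a' b p₁ hb ha' hb) p₁ p₂ hne hbe
  have hexit : ∃ d, Function.Bijective (act d) ∧ act d p₂ ≠ p₁ ∧ act d p₂ ≠ p₂ := by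
    by_contra! hcon
    apply hno {p₁, p₂}
    · intro c p hc
      exact hcol b p₁ _ (hw2 c p b p₁ hc hb) p₁ p₂ hne hbe
    · rintro a' ha' x (rfl | rfl)
      · exact hperm a' ha'
      · by_cases h : act a' x = p₁
        · exact Or.inl h
        · exact Or.inr (hcon a' ha' h)
    · rintro c p x hc (rfl | rfl)
      · exact hw2 b x c p hb hc
      · rw [hp₂]; exact hw3 b p₁ a c p hb ha hc
  have hbne : ∀ x, act b x ≠ p₁ := by
    intro x hx
    have : act b x ∈ (Finset.univ \ {p₁} : Finset Q) := by
      rw [← hb]; exact Finset.mem_image_of_mem _ (Finset.mem_univ _)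
    simp [hx] at this
  have hinj : ∀ x y, x ≠ y → act b x = act b y → (x = p₁ ∧ y = p₂) ∨ (x = p₂ ∧ y = p₁) := by
    intro x y hxy he
    have e1 := hcol b p₁ p₁ (hw2 b p₁ b p₁ hb hb) x y hxy he
    have e2 := hcol b p₁ _ (hw3 b p₁ a b p₁ hb ha hb) x y hxy he
    rw [← hp₂] at e2
    rcases e1 with h | h <;> rcases e2 with h' | h'
    · exact absurd (h.trans h'.symm) hne
    · exact Or.inl ⟨h.symm, h'.symm⟩
    · exact Or.inr ⟨h'.symm, h.symm⟩
    · exact absurd (h.trans h'.symm) hne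
  have hlast : ∀ q, q ≠ p₁ → q ≠ p₂ →
      (Finset.univ \ {q}).image (act b) = Finset.univ \ {p₁, act b q} := by
    intro q hq1 hq2
    ext y
    simp only [Finset.mem_image, Finset.mem_sdiff, Finset.mem_univ, true_and,
      Finset.mem_singleton, Finset.mem_insert, not_or]
    constructor
    · rintro ⟨x, hx, rfl⟩
      refine ⟨hbne x, fun he => ?_⟩
      rcases hinj x q hx he with h | h
      · exact hq2 h.2
      · exact hq1 h.2
    · rintro ⟨hy1, hy2⟩
      have : y ∈ Finset.univ.image (act b) := by rw [hb]; simpa using hy1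
      obtain ⟨x, -, rfl⟩ := Finset.mem_image.1 this
      exact ⟨x, fun h => hy2 (by rw [h]), rfl⟩
  -- the final assembly
  suffices main : ∃ a' d, Function.Bijective (act a') ∧ act a' p₁ = p₂ ∧
      Function.Bijective (act d) ∧ act d p₂ ≠ p₁ ∧ act d p₂ ≠ p₂ ∧
      ((3 ≤ Set.ncard {x : Q | ∃ k : ℕ, (act a')^[k] p₁ = x} ∧ d = a') ∨
        (Set.ncard {x : Q | ∃ k : ℕ, (act a')^[k] p₁ = x} = 2 ∧
          Finset.univ.image (act d) = Finset.univ ∧ act d p₁ = p₁ ∧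
          ∃ p₃ : Q, p₃ ≠ p₁ ∧ p₃ ≠ p₂ ∧ act d p₃ = p₂)) by
    obtain ⟨a', d, ha', hp', hd, hd1, hd2, hfin⟩ := main
    exact
      ⟨p₁, p₂, hne, b, a', d, act d p₂, hd1, hd2, hb, hbe,
        Finset.image_univ_of_surjective ha'.2, hp',
        by simp only [wordImage, hb, image_compl_inj _ ha', hp'],
        hbne _,
        by simp only [wordImage, hb, image_compl_inj _ ha', image_compl_inj _ hd, hp'],
        by
          simp only [wordImage, hb, image_compl_inj _ ha', image_compl_inj _ hd, hp']
          exact hlast _ hd1 hd2,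
        hfin⟩
  obtain ⟨d, hd, hd1, hd2⟩ := hexit
  by_cases hcase : act a p₂ = p₁
  · -- `a` swaps `p₁` and `p₂`
    by_cases hdp : act d p₁ = p₂
    · refine ⟨d, d, hd, hdp, hd, hd1, hd2, ?_⟩
      left
      refine ⟨?_, rfl⟩
      rw [show (3 : ℕ) = Set.ncard {p₁, p₂, act d p₂} from
        (Set.ncard_eq_three.2 ⟨_, _, _, hne, hd1.symm, hd2.symm, rfl⟩).symm]
      apply Set.ncard_le_ncard _ (Set.toFinite _)
      rintro x (rfl | rfl | rfl)
      · exact ⟨0, rfl⟩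
      · exact ⟨1, hdp⟩
      · exact ⟨2, by simp [hdp]⟩
    · have hdp1 : act d p₁ = p₁ := (hperm d hd).resolve_right hdp
      refine ⟨a, d, ha, hp₂.symm, hd, hd1, hd2, ?_⟩
      right
      refine ⟨?_, Finset.image_univ_of_surjective hd.2, hdp1, ?_⟩
      · have : {x : Q | ∃ k : ℕ, (act a)^[k] p₁ = x} = {p₁, p₂} := by
          ext x
          constructor
          · rintro ⟨k, rfl⟩
            induction k with
            | zero => left; rfl
            | succ k ih =>
              rw [Function.iterate_succ_apply']
              rcases ih with h | h
              · rw [h]; right; exact hp₂.symm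
              · rw [Set.mem_singleton_iff.1 h]; left; exact hcase
          · rintro (rfl | rfl)
            · exact ⟨0, rfl⟩
            · exact ⟨1, hp₂.symm⟩
        rw [this, Set.ncard_pair hne]
      · obtain ⟨p₃, h3⟩ := hd.2 p₂
        refine ⟨p₃, ?_, ?_, h3⟩
        · rintro rfl; exact hdp h3
        · rintro rfl; exact hd2 h3
  · have ha2 : act a p₂ ≠ p₂ := by
      intro h
      exact hne (ha.1 (hp₂.symm.trans h.symm))
    refine ⟨a, a, ha, hp₂.symm, ha, hcase, ha2, ?_⟩
    left
    refine ⟨?_, rfl⟩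
    rw [show (3 : ℕ) = Set.ncard {p₁, p₂, act a p₂} from
      (Set.ncard_eq_three.2 ⟨_, _, _, hne, Ne.symm hcase, ha2.symm, rfl⟩).symm]
    apply Set.ncard_le_ncard _ (Set.toFinite _)
    rintro x (rfl | rfl | rfl)
    · exact ⟨0, rfl⟩
    · exact ⟨1, hp₂.symm⟩
    · exact ⟨2, by simp [← hp₂]⟩
end
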